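/- Let Γ be a non-elementary Gromov hyperbolic group with an invariant roughly geodesic strongly hyperbolic metric d of growth exponent δ, and let φ be a pointwise nonnegative positive definite function on Γ (with GNS representation π_φ). Then δ(φ) = δ if and only if the trivial representation is weakly contained in π_φ. Equivalently, δ(φ) < δ if and only if π_φ has a spectral gap. -/

import Mathlib

open Filter MeasureTheory
open scoped RealInnerProductSpace ENNReal

/-- An invariant metric on a discrete group with uniformly locally finite balls. -/
structure InvMetric (Γ : Type*) [Group Γ] where
  d : Γ → Γ → ℝ
  symm : ∀ g h, d g h = d h g
  triangle : ∀ g h k, d g k ≤ d g h + d h k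
  refl : ∀ g, d g g = 0
  eq_of_dist_eq_zero : ∀ g h, d g h = 0 → g = h
  invariant : ∀ g x y, d (g * x) (g * y) = d x y
  finiteBalls : ∀ r : ℝ, {g : Γ | d g 1 ≤ r}.Finite

variable {Γ : Type*} [Group Γ]

/-- The growth exponent `δ = limsup_r (1/r) log |B_r|`. -/
noncomputable def growthExp (M : InvMetric Γ) : ℝ :=
  limsup (fun r : ℝ => Real.log (Nat.card {g : Γ | M.d g 1 ≤ r}) / r) atTop

/-- The critical exponent of a nonnegative function: the abscissa of convergence of
the Poincaré series `∑_g e^{-t d(g,e)} f(g)` (infimum over nonnegative `t`). -/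
noncomputable def critExp (M : InvMetric Γ) (f : Γ → ℝ) : ℝ :=
  sInf {t : ℝ | 0 ≤ t ∧ Summable fun g : Γ => Real.exp (-t * M.d g 1) * f g}

/-- The operator norm of `λ(f)` on `ℓ²(Γ)` for the left regular representation,
realized as the supremum of `|⟨λ(f)u, w⟩|` over finitely supported `u, w` of
`ℓ²`-norm at most one. -/
noncomputable def regNorm (f : Γ →₀ ℝ) : ℝ :=
  sSup {c : ℝ | ∃ u w : Γ →₀ ℝ,
    (∑ x ∈ u.support, u x ^ 2) ≤ 1 ∧ (∑ x ∈ w.support, w x ^ 2) ≤ 1 ∧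
    c = |∑ g ∈ f.support, ∑ x ∈ w.support, f g * u (g⁻¹ * x) * w x|}

/-- `π(f) = ∑_g f(g) π(g)` as a bounded operator. -/
noncomputable def opOf {H : Type*} [NormedAddCommGroup H] [InnerProductSpace ℝ H]
    (π : Γ →* (H ≃ₗᵢ[ℝ] H)) (f : Γ →₀ ℝ) : H →L[ℝ] H :=
  ∑ g ∈ f.support, f g • ((π g).toContinuousLinearEquiv : H →L[ℝ] H)

/-- The Gromov product `(x,y)_o`. -/
noncomputable def gromov (M : InvMetric Γ) (x y o : Γ) : ℝ :=
  (M.d x o + M.d y o - M.d x y) / 2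

/-- Gromov hyperbolicity. -/
def IsHyperbolic (M : InvMetric Γ) : Prop :=
  ∃ C : ℝ, ∀ x y z o : Γ, min (gromov M x z o) (gromov M z y o) - C ≤ gromov M x y o

/-- Strong hyperbolicity in the sense of Mineyev--Yu / Nica--Spakula. -/
def IsStronglyHyperbolic (M : InvMetric Γ) : Prop :=
  ∃ ε > (0 : ℝ), ∀ x y z o : Γ,
    Real.exp (-ε * gromov M x y o) ≤
      Real.exp (-ε * gromov M x z o) + Real.exp (-ε * gromov M z y o)

/-- Roughly geodesic. -/
def IsRoughlyGeodesic (M : InvMetric Γ) : Prop :=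
  ∃ C : ℝ, 0 ≤ C ∧ ∀ x y : Γ, ∀ t : ℝ, 0 ≤ t → t ≤ M.d x y →
    ∃ z : Γ, |M.d x z - t| ≤ C ∧ |M.d z y - (M.d x y - t)| ≤ C

/-- `π` has almost invariant vectors (equivalently, `1 ≺ π`). -/
def HasAlmostInvariantVectors {H : Type*} [NormedAddCommGroup H]
    [InnerProductSpace ℝ H] (π : Γ →* (H ≃ₗᵢ[ℝ] H)) : Prop :=
  ∀ (S : Finset Γ) (ε : ℝ), 0 < ε → ∃ w : H, ‖w‖ = 1 ∧ ∀ g ∈ S, ‖π g w - w‖ < ε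

/-- The ball average `Avr_r(π) = (1/|B_r|) ∑_{g∈B_r} π(g)`. -/
noncomputable def ballAvg {H : Type*} [NormedAddCommGroup H] [InnerProductSpace ℝ H]
    (M : InvMetric Γ) (π : Γ →* (H ≃ₗᵢ[ℝ] H)) (r : ℝ) : H →L[ℝ] H :=
  (Nat.card {g : Γ | M.d g 1 ≤ r} : ℝ)⁻¹ •
    ∑ g ∈ (M.finiteBalls r).toFinset, ((π g).toContinuousLinearEquiv : H →L[ℝ] H)

/-!
Write `δ` for the growth exponent and `k_γ(g) = e^{-δ (d(g, γ) - d(g, 1))}`. By strong hyperbolicity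
these kernels have continuous boundary values, the Radon–Nikodym cocycle of the Patterson–Sullivan
measure, and constants can be approximated at infinity by `∑ μ_γ k_γ` with `μ ≥ 0` finitely
supported and bounded below on a prescribed finite set. A Patterson-type modification `w` of
`e^{-δ d(g, 1)}` then satisfies `μ * w ≈ w` outside a finite set, and if `δ(φ) = δ` then `w` can be
chosen summable with arbitrarily large `φ`-mass. Since `φ = ⟨π(·)v, v⟩` is nonnegative, the
pointwise estimate turns into `⟨π(μ)ξ, ξ⟩ ≈ ‖ξ‖²` for `ξ = ∑ w(g) π(g)v`, so `ξ / ‖ξ‖` is almost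
invariant.

Conversely, if `max(δ(φ), δ/2) < t < δ`, the weight `e^{-t d(g, 1)}` is `φ`-summable, and a Schur
test with this weight bounds `‖∑_{g ∈ B_r} π(g)‖` by `K e^{t r}`, which is much smaller than `|B_r|`
for suitable `r`; almost invariant vectors would make the norm equal to `|B_r|`.
-/

namespace InvMetric

variable (M : InvMetric Γ)

lemma d_nonneg (x y : Γ) : 0 ≤ M.d x y := by
  have := M.triangle x y x
  rw [M.refl, M.symm y x] at this
  linarith

lemma d_inv_mul_one (g h : Γ) : M.d (h⁻¹ * g) 1 = M.d g h := by
  simpa using (M.invariant h (h⁻¹ * g) 1).symm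

lemma d_inv_one (g : Γ) : M.d g⁻¹ 1 = M.d g 1 := by
  simpa [M.symm 1 g] using M.d_inv_mul_one 1 g

/-- The closed ball of radius `r` about the identity, as a finite set. -/
noncomputable def ball (r : ℝ) : Finset Γ := (M.finiteBalls r).toFinset

@[simp]
lemma mem_ball {r : ℝ} {g : Γ} : g ∈ M.ball r ↔ M.d g 1 ≤ r := by
  simp [ball]

lemma card_ball (r : ℝ) : (M.ball r).card = Nat.card {g : Γ | M.d g 1 ≤ r} := by
  rw [Nat.card_coe_set_eq, Set.ncard_eq_toFinset_card _ (M.finiteBalls r), ball]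

lemma card_ball_pos {r : ℝ} (hr : 0 ≤ r) : 0 < (M.ball r).card :=
  Finset.card_pos.mpr ⟨1, by simpa [M.refl] using hr⟩

lemma eventually_cofinite_le_d (r : ℝ) : ∀ᶠ g in cofinite, r ≤ M.d g 1 :=
  eventually_cofinite.mpr ((M.finiteBalls r).subset fun _ hg => (not_le.mp hg).le)

lemma exists_forall_mem_d_le (A : Finset Γ) : ∃ R : ℝ, ∀ g ∈ A, M.d g 1 ≤ R :=
  ⟨∑ g ∈ A, M.d g 1, fun _ hg =>
    Finset.single_le_sum (f := fun g => M.d g 1) (fun g _ => M.d_nonneg g 1) hg⟩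

end InvMetric

section GrowthExponent

variable {M : InvMetric Γ}

-- In `ℝ` an unbounded `limsup` is `0`, so a positive growth exponent is a genuine one.
lemma isBoundedUnder_log_card_ball_div (hne : 0 < growthExp M) :
    IsBoundedUnder (· ≤ ·) atTop
      (fun r : ℝ => Real.log (Nat.card {g : Γ | M.d g 1 ≤ r}) / r) :=
  not_imp_comm.mp Real.limsup_of_not_isBoundedUnder hne.ne'

lemma eventually_card_ball_le (hne : 0 < growthExp M) {a : ℝ} (ha : growthExp M < a) :
    ∀ᶠ r : ℝ in atTop, ((M.ball r).card : ℝ) ≤ Real.exp (a * r) := by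
  filter_upwards [eventually_lt_of_limsup_lt ha (isBoundedUnder_log_card_ball_div hne),
    eventually_gt_atTop 0] with r hr hr0
  rw [div_lt_iff₀ hr0, ← M.card_ball] at hr
  exact (Real.log_le_iff_le_exp (mod_cast M.card_ball_pos hr0.le)).mp hr.le

lemma frequently_exp_lt_card_ball {a : ℝ} (ha : a < growthExp M) :
    ∃ᶠ r : ℝ in atTop, Real.exp (a * r) < (M.ball r).card := by
  have hcob : IsCoboundedUnder (· ≤ ·) atTop
      (fun r : ℝ => Real.log (Nat.card {g : Γ | M.d g 1 ≤ r}) / r) := by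
    refine IsBoundedUnder.isCoboundedUnder_le ⟨0, ?_⟩
    rw [eventually_map]
    filter_upwards [eventually_gt_atTop 0] with r hr
    exact div_nonneg (Real.log_natCast_nonneg _) hr.le
  refine ((frequently_lt_of_lt_limsup hcob ha).and_eventually (eventually_gt_atTop 0)).mono ?_
  rintro r ⟨hr, hr0⟩
  rw [lt_div_iff₀ hr0, ← M.card_ball] at hr
  exact (Real.lt_log_iff_exp_lt (mod_cast M.card_ball_pos hr0.le)).mp hr

lemma exists_mul_exp_lt_card_ball {t : ℝ} (ht : t < growthExp M) (C : ℝ) :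
    ∃ r : ℝ, 0 ≤ r ∧ C * Real.exp (t * r) < (M.ball r).card := by
  obtain ⟨a, hta, ha⟩ := exists_between ht
  have hexp : Tendsto (fun r : ℝ => Real.exp ((a - t) * r)) atTop atTop :=
    Real.tendsto_exp_atTop.comp (tendsto_id.const_mul_atTop (sub_pos.mpr hta))
  obtain ⟨r, hr, hCr, hr0⟩ := ((frequently_exp_lt_card_ball ha).and_eventually
    ((hexp.eventually_ge_atTop C).and (eventually_ge_atTop 0))).exists
  refine ⟨r, hr0, lt_of_le_of_lt ?_ hr⟩
  calc C * Real.exp (t * r) ≤ Real.exp ((a - t) * r) * Real.exp (t * r) := by gcongr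
    _ = Real.exp (a * r) := by rw [← Real.exp_add]; ring_nf

lemma summable_card_ball_mul_exp (hne : 0 < growthExp M) {t : ℝ} (ht : growthExp M < t) :
    Summable fun n : ℕ => ((M.ball (n + 1)).card : ℝ) * Real.exp (-t * n) := by
  obtain ⟨a, ha, hat⟩ := exists_between ht
  have hgeom : Summable fun n : ℕ => Real.exp a * Real.exp (n * (a - t)) :=
    (Real.summable_exp_nat_mul_iff.mpr (by linarith)).mul_left _
  refine hgeom.of_norm_bounded_eventually_nat ?_
  have htend : Tendsto (fun n : ℕ => (n : ℝ) + 1) atTop atTop :=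
    tendsto_atTop_add_const_right _ _ tendsto_natCast_atTop_atTop
  filter_upwards [htend.eventually (eventually_card_ball_le hne ha)] with n hn
  rw [Real.norm_of_nonneg (by positivity)]
  calc ((M.ball (n + 1)).card : ℝ) * Real.exp (-t * n)
      ≤ Real.exp (a * (n + 1)) * Real.exp (-t * n) := by gcongr
    _ = Real.exp a * Real.exp (n * (a - t)) := by
        rw [← Real.exp_add, ← Real.exp_add]; ring_nf

lemma sum_exp_floor_eq_le {t : ℝ} (ht : 0 ≤ t) (A : Finset Γ) (n : ℕ) :
    ∑ g ∈ A with ⌊M.d g 1⌋₊ = n, Real.exp (-t * M.d g 1) ≤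
      (M.ball (n + 1)).card * Real.exp (-t * n) := by
  have hfloor : ∀ g ∈ A.filter fun g => ⌊M.d g 1⌋₊ = n, n ≤ M.d g 1 ∧ M.d g 1 ≤ n + 1 := by
    intro g hg
    rw [← (Finset.mem_filter.mp hg).2]
    exact ⟨Nat.floor_le (M.d_nonneg g 1), (Nat.lt_floor_add_one _).le⟩
  calc ∑ g ∈ A with ⌊M.d g 1⌋₊ = n, Real.exp (-t * M.d g 1)
      ≤ ∑ g ∈ A with ⌊M.d g 1⌋₊ = n, Real.exp (-t * n) :=
        Finset.sum_le_sum fun g hg => Real.exp_le_exp.mpr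
          (mul_le_mul_of_nonpos_left (hfloor g hg).1 (neg_nonpos.mpr ht))
    _ ≤ ∑ _g ∈ M.ball (n + 1), Real.exp (-t * n) :=
        Finset.sum_le_sum_of_subset_of_nonneg (fun g hg => M.mem_ball.mpr (hfloor g hg).2)
          fun _ _ _ => (Real.exp_pos _).le
    _ = (M.ball (n + 1)).card * Real.exp (-t * n) := by rw [Finset.sum_const, nsmul_eq_mul]

lemma summable_exp_of_growthExp_lt (hne : 0 < growthExp M) {t : ℝ} (ht : growthExp M < t) :
    Summable fun g : Γ => Real.exp (-t * M.d g 1) := by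
  classical
  refine summable_of_sum_le (c := ∑' n : ℕ, ((M.ball (n + 1)).card : ℝ) * Real.exp (-t * n))
    (fun g => (Real.exp_pos _).le) fun A => ?_
  rw [← Finset.sum_fiberwise_of_maps_to fun g hg => Finset.mem_image_of_mem (⌊M.d · 1⌋₊) hg]
  exact (Finset.sum_le_sum fun n _ => sum_exp_floor_eq_le (hne.trans ht).le A n).trans
    ((summable_card_ball_mul_exp hne ht).sum_le_tsum _ fun n _ => by positivity)

end GrowthExponent

section CriticalExponent

variable {M : InvMetric Γ} {f : Γ → ℝ}

lemma critExp_le_of_summable {t : ℝ} (ht : 0 ≤ t)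
    (hs : Summable fun g => Real.exp (-t * M.d g 1) * f g) : critExp M f ≤ t :=
  csInf_le ⟨0, fun _ hx => hx.1⟩ ⟨ht, hs⟩

lemma summable_exp_mul_of_le (hf : ∀ g, 0 ≤ f g) {s t : ℝ} (hst : s ≤ t)
    (hs : Summable fun g => Real.exp (-s * M.d g 1) * f g) :
    Summable fun g => Real.exp (-t * M.d g 1) * f g := by
  refine hs.of_nonneg_of_le (fun g => mul_nonneg (Real.exp_pos _).le (hf g)) fun g => ?_
  have := M.d_nonneg g 1
  have := hf g
  gcongr

lemma summable_exp_mul_of_growthExp_lt (hne : 0 < growthExp M) {C : ℝ}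
    (hfC : ∀ g, |f g| ≤ C) {t : ℝ} (ht : growthExp M < t) :
    Summable fun g => Real.exp (-t * M.d g 1) * f g := by
  refine ((summable_exp_of_growthExp_lt hne ht).mul_right C).of_norm_bounded fun g => ?_
  rw [norm_mul, Real.norm_of_nonneg (Real.exp_pos _).le]
  exact mul_le_mul_of_nonneg_left (hfC g) (Real.exp_pos _).le

lemma critExp_le_growthExp (hne : 0 < growthExp M) {C : ℝ} (hfC : ∀ g, |f g| ≤ C) :
    critExp M f ≤ growthExp M :=
  le_of_forall_gt_imp_ge_of_dense fun _ ht => critExp_le_of_summable (hne.trans ht).le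
    (summable_exp_mul_of_growthExp_lt hne hfC ht)

lemma summable_exp_mul_of_critExp_lt (hne : 0 < growthExp M) (hf : ∀ g, 0 ≤ f g) {C : ℝ}
    (hfC : ∀ g, |f g| ≤ C) {t : ℝ} (ht : critExp M f < t) :
    Summable fun g => Real.exp (-t * M.d g 1) * f g := by
  have hnonempty : {t : ℝ | 0 ≤ t ∧ Summable fun g => Real.exp (-t * M.d g 1) * f g}.Nonempty :=
    ⟨growthExp M + 1, by linarith, summable_exp_mul_of_growthExp_lt hne hfC (lt_add_one _)⟩
  obtain ⟨s, ⟨-, hs⟩, hst⟩ := exists_lt_of_csInf_lt hnonempty ht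
  exact summable_exp_mul_of_le hf hst.le hs

lemma exists_lt_sum_of_lt_critExp (hf : ∀ g, 0 ≤ f g) {t : ℝ} (ht0 : 0 ≤ t)
    (ht : t < critExp M f) (L : ℝ) :
    ∃ A : Finset Γ, L < ∑ g ∈ A, Real.exp (-t * M.d g 1) * f g := by
  by_contra! h
  exact ht.not_ge (critExp_le_of_summable ht0
    (summable_of_sum_le (fun g => mul_nonneg (Real.exp_pos _).le (hf g)) h))

lemma summable_exp_mul_translate {t : ℝ} (ht : 0 ≤ t) (hf : ∀ g, 0 ≤ f g)
    (hs : Summable fun g => Real.exp (-t * M.d g 1) * f g) (k : Γ) :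
    Summable fun g => Real.exp (-t * M.d g 1) * f (k⁻¹ * g) := by
  rw [← (Equiv.mulLeft k).summable_iff]
  refine (hs.mul_left (Real.exp (t * M.d k 1))).of_nonneg_of_le
    (fun g => mul_nonneg (Real.exp_pos _).le (hf _)) fun g => ?_
  have hd : M.d g 1 ≤ M.d (k * g) 1 + M.d k 1 := by
    have := M.triangle g k⁻¹ 1
    rwa [← M.d_inv_mul_one g k⁻¹, inv_inv, M.d_inv_one] at this
  simp only [Function.comp_apply, Equiv.coe_mulLeft, inv_mul_cancel_left]
  rw [← mul_assoc, ← Real.exp_add]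
  refine mul_le_mul_of_nonneg_right (Real.exp_le_exp.mpr ?_) (hf g)
  nlinarith

lemma sum_exp_d_le_tsum {s : ℝ} (hs : Summable fun g => Real.exp (-s * M.d g 1)) (A : Finset Γ)
    (z : Γ) : ∑ γ ∈ A, Real.exp (-s * M.d γ z) ≤ ∑' g, Real.exp (-s * M.d g 1) := by
  simp only [← M.d_inv_mul_one _ z]
  rw [← (Equiv.mulLeft z⁻¹).tsum_eq fun g => Real.exp (-s * M.d g 1)]
  exact ((Equiv.mulLeft z⁻¹).summable_iff.mpr hs).sum_le_tsum A fun _ _ => (Real.exp_pos _).le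

end CriticalExponent

section GromovProduct

variable {M : InvMetric Γ}

lemma gromov_nonneg (x y o : Γ) : 0 ≤ gromov M x y o := by
  have := M.triangle x o y
  rw [M.symm o y] at this
  unfold gromov
  linarith

lemma gromov_comm (x y o : Γ) : gromov M x y o = gromov M y x o := by
  unfold gromov
  rw [M.symm x y, add_comm]

lemma gromov_le_left (x y o : Γ) : gromov M x y o ≤ M.d x o := by
  have := M.triangle y x o
  rw [M.symm y x] at this
  unfold gromov
  linarith

lemma gromov_le_right (x y o : Γ) : gromov M x y o ≤ M.d y o := by
  rw [gromov_comm]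
  exact gromov_le_left y x o

lemma IsStronglyHyperbolic.isHyperbolic (h : IsStronglyHyperbolic M) : IsHyperbolic M := by
  obtain ⟨ε, hε, h⟩ := h
  refine ⟨Real.log 2 / ε, fun x y z o => ?_⟩
  set m := min (gromov M x z o) (gromov M z y o)
  have hxz : m ≤ gromov M x z o := min_le_left _ _
  have hzy : m ≤ gromov M z y o := min_le_right _ _
  have hexp : Real.exp (-ε * gromov M x y o) ≤ Real.exp (Real.log 2 + -ε * m) :=
    calc Real.exp (-ε * gromov M x y o)
        ≤ Real.exp (-ε * gromov M x z o) + Real.exp (-ε * gromov M z y o) := h x y z o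
      _ ≤ Real.exp (-ε * m) + Real.exp (-ε * m) := by
          gcongr ?_ + ?_ <;>
            exact Real.exp_le_exp.mpr (mul_le_mul_of_nonpos_left ‹_› (neg_nonpos.mpr hε.le))
      _ = Real.exp (Real.log 2 + -ε * m) := by
          rw [Real.exp_add, Real.exp_log two_pos, two_mul]
  rw [Real.exp_le_exp] at hexp
  rw [sub_le_iff_le_add, ← sub_le_iff_le_add', le_div_iff₀ hε]
  linarith

lemma IsHyperbolic.exists_forall_d_le_sub (hhyp : IsHyperbolic M) (hrg : IsRoughlyGeodesic M) :
    ∃ C : ℝ, ∀ (g : Γ) (i : ℝ), 0 ≤ i → ∃ z : Γ, ∀ γ : Γ, i ≤ gromov M γ g 1 →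
      M.d γ z ≤ M.d γ 1 - i + C := by
  obtain ⟨C, -, hC⟩ := hrg
  obtain ⟨D, hD⟩ := hhyp
  refine ⟨3 * C + 2 * D, fun g i hi0 => ?_⟩
  by_cases hi : i ≤ M.d g 1
  · obtain ⟨z, h1z, hzg⟩ := hC 1 g i hi0 (by rwa [M.symm])
    rw [M.symm 1 z, abs_le] at h1z
    rw [M.symm 1 g, abs_le] at hzg
    refine ⟨z, fun γ hγ => ?_⟩
    have hgz : i - C ≤ gromov M g z 1 := by
      unfold gromov
      rw [M.symm g z]
      linarith
    have hγz : i - C - D ≤ gromov M γ z 1 :=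
      (sub_le_sub_right (le_min (by linarith) hgz) D).trans (hD γ z g 1)
    unfold gromov at hγz
    linarith
  · exact ⟨1, fun γ hγ => absurd (hγ.trans (gromov_le_right γ g 1)) hi⟩

end GromovProduct

section BusemannKernel

variable {M : InvMetric Γ} {s t : ℝ}

/-- The kernel `e^{-t (d(g, γ) - d(g, 1))}`: a discrete Poisson kernel, i.e. the exponential of a
Busemann function with the boundary point replaced by the group element `g`. -/
noncomputable def busemannKernel (M : InvMetric Γ) (t : ℝ) (γ g : Γ) : ℝ :=
  Real.exp (-t * (M.d g γ - M.d g 1))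

lemma busemannKernel_eq_exp_gromov (γ g : Γ) :
    busemannKernel M t γ g = Real.exp (2 * t * gromov M γ g 1 - t * M.d γ 1) := by
  unfold busemannKernel gromov
  rw [M.symm γ g]
  ring_nf

lemma busemannKernel_pos (γ g : Γ) : 0 < busemannKernel M t γ g := Real.exp_pos _

lemma busemannKernel_le (ht : 0 ≤ t) (γ g : Γ) :
    busemannKernel M t γ g ≤ Real.exp (t * M.d γ 1) := by
  rw [busemannKernel_eq_exp_gromov, Real.exp_le_exp]
  nlinarith [gromov_le_left (M := M) γ g 1]

lemma busemannKernel_le_of_gromov_mem_Icc (ht : 0 ≤ t) (hts : t ≤ s) {γ g z : Γ} {r i C : ℝ}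
    (hr : M.d γ 1 ≤ r) (hi : gromov M γ g 1 ≤ i + 1) (hz : M.d γ z ≤ M.d γ 1 - i + C) :
    busemannKernel M t γ g ≤ Real.exp (2 * t + s * C) *
      Real.exp ((s - t) * r + (2 * t - s) * i) * Real.exp (-s * M.d γ z) := by
  rw [busemannKernel_eq_exp_gromov, ← Real.exp_add, ← Real.exp_add, Real.exp_le_exp]
  linarith [mul_le_mul_of_nonneg_left hz (ht.trans hts), mul_le_mul_of_nonneg_left hi ht,
    mul_le_mul_of_nonneg_left hr (sub_nonneg.mpr hts)]

lemma sum_range_exp_mul_le {θ I : ℝ} (hθ : 0 < θ) (hI : 0 ≤ I) :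
    ∑ i ∈ Finset.range (⌊I⌋₊ + 1), Real.exp (θ * i) ≤
      Real.exp θ / (Real.exp θ - 1) * Real.exp (θ * I) := by
  have hexp : 1 < Real.exp θ := Real.one_lt_exp_iff.mpr hθ
  have hpow : Real.exp θ ^ (⌊I⌋₊ + 1) ≤ Real.exp θ * Real.exp (θ * I) := by
    rw [pow_succ', ← Real.exp_nat_mul, mul_comm _ θ]
    gcongr
    exact Nat.floor_le hI
  calc ∑ i ∈ Finset.range (⌊I⌋₊ + 1), Real.exp (θ * i)
      = ∑ i ∈ Finset.range (⌊I⌋₊ + 1), Real.exp θ ^ i := by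
        simp only [← Real.exp_nat_mul, mul_comm θ]
    _ = (Real.exp θ ^ (⌊I⌋₊ + 1) - 1) / (Real.exp θ - 1) := geom_sum_eq hexp.ne' _
    _ ≤ Real.exp θ * Real.exp (θ * I) / (Real.exp θ - 1) :=
        div_le_div_of_nonneg_right (by linarith) (by linarith)
    _ = Real.exp θ / (Real.exp θ - 1) * Real.exp (θ * I) := mul_div_right_comm _ _ _

lemma exists_sum_busemannKernel_slice_le (hhyp : IsHyperbolic M) (hrg : IsRoughlyGeodesic M)
    (ht : 0 ≤ t) (hts : t ≤ s) (hs : Summable fun g => Real.exp (-s * M.d g 1)) :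
    ∃ K : ℝ, 0 < K ∧ ∀ (r i : ℝ) (g : Γ) (A : Finset Γ), 0 ≤ i → (∀ γ ∈ A, M.d γ 1 ≤ r) →
      (∀ γ ∈ A, i ≤ gromov M γ g 1 ∧ gromov M γ g 1 ≤ i + 1) →
      ∑ γ ∈ A, busemannKernel M t γ g ≤ K * Real.exp ((s - t) * r + (2 * t - s) * i) := by
  obtain ⟨C, hC⟩ := hhyp.exists_forall_d_le_sub hrg
  have hZ : 0 < ∑' g, Real.exp (-s * M.d g 1) :=
    hs.tsum_pos (fun g => (Real.exp_pos _).le) 1 (Real.exp_pos _)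
  refine ⟨Real.exp (2 * t + s * C) * ∑' g, Real.exp (-s * M.d g 1), by positivity,
    fun r i g A hi hA hAi => ?_⟩
  obtain ⟨z, hz⟩ := hC g i hi
  calc ∑ γ ∈ A, busemannKernel M t γ g
      ≤ ∑ γ ∈ A, Real.exp (2 * t + s * C) * Real.exp ((s - t) * r + (2 * t - s) * i) *
          Real.exp (-s * M.d γ z) := Finset.sum_le_sum fun γ hγ =>
        busemannKernel_le_of_gromov_mem_Icc ht hts (hA γ hγ) (hAi γ hγ).2 (hz γ (hAi γ hγ).1)
    _ ≤ Real.exp (2 * t + s * C) * Real.exp ((s - t) * r + (2 * t - s) * i) *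
          ∑' g, Real.exp (-s * M.d g 1) := by
        rw [← Finset.mul_sum]
        gcongr
        exact sum_exp_d_le_tsum hs A z
    _ = _ := by ring

lemma exists_sum_busemannKernel_le (hhyp : IsHyperbolic M) (hrg : IsRoughlyGeodesic M)
    (hts : t ≤ s) (hst : s < 2 * t) (hs : Summable fun g => Real.exp (-s * M.d g 1)) :
    ∃ K : ℝ, 0 < K ∧ ∀ (r I : ℝ) (g : Γ) (A : Finset Γ), 0 ≤ I → (∀ γ ∈ A, M.d γ 1 ≤ r) →
      (∀ γ ∈ A, gromov M γ g 1 ≤ I) →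
      ∑ γ ∈ A, busemannKernel M t γ g ≤ K * Real.exp ((s - t) * r + (2 * t - s) * I) := by
  classical
  obtain ⟨K, hK, hslice⟩ :=
    exists_sum_busemannKernel_slice_le hhyp hrg (by linarith) hts hs
  have hθ : 0 < 2 * t - s := by linarith
  have hden : 0 < Real.exp (2 * t - s) - 1 := sub_pos.mpr (Real.one_lt_exp_iff.mpr hθ)
  refine ⟨K * (Real.exp (2 * t - s) / (Real.exp (2 * t - s) - 1)), by positivity,
    fun r I g A hI hA hAI => ?_⟩
  have hmaps : ∀ γ ∈ A, ⌊gromov M γ g 1⌋₊ ∈ Finset.range (⌊I⌋₊ + 1) := fun γ hγ =>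
    Finset.mem_range_succ_iff.mpr (Nat.floor_le_floor (hAI γ hγ))
  calc ∑ γ ∈ A, busemannKernel M t γ g
      = ∑ i ∈ Finset.range (⌊I⌋₊ + 1), ∑ γ ∈ A with ⌊gromov M γ g 1⌋₊ = i,
          busemannKernel M t γ g := (Finset.sum_fiberwise_of_maps_to hmaps _).symm
    _ ≤ ∑ i ∈ Finset.range (⌊I⌋₊ + 1), K * Real.exp ((s - t) * r + (2 * t - s) * i) := by
        refine Finset.sum_le_sum fun i _ => hslice r i g _ i.cast_nonneg
          (fun γ hγ => hA γ (Finset.mem_filter.mp hγ).1) fun γ hγ => ?_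
        rw [← (Finset.mem_filter.mp hγ).2]
        exact ⟨Nat.floor_le (gromov_nonneg γ g 1), (Nat.lt_floor_add_one _).le⟩
    _ = K * Real.exp ((s - t) * r) *
          ∑ i ∈ Finset.range (⌊I⌋₊ + 1), Real.exp ((2 * t - s) * i) := by
        simp only [Real.exp_add, Finset.mul_sum, mul_assoc]
    _ ≤ K * Real.exp ((s - t) * r) * (Real.exp (2 * t - s) / (Real.exp (2 * t - s) - 1) *
          Real.exp ((2 * t - s) * I)) := by
        gcongr
        exact sum_range_exp_mul_le hθ hI
    _ = _ := by rw [Real.exp_add]; ring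

end BusemannKernel

section ContinuityAtInfinity

variable {M : InvMetric Γ} {t : ℝ} {f : Γ → ℝ}

/-- The functions on `Γ` that are uniformly continuous at infinity: `f g - f g'` tends to zero as
the Gromov product of `g` and `g'` tends to infinity. -/
def contAtInfinity (M : InvMetric Γ) : Submodule ℝ (Γ → ℝ) where
  carrier := {f | Tendsto (fun p : Γ × Γ => f p.1 - f p.2)
    (comap (fun p => gromov M p.1 p.2 1) atTop) (nhds 0)}
  zero_mem' := by simpa using tendsto_const_nhds
  add_mem' hf hg := by simpa [add_sub_add_comm] using hf.add hg
  smul_mem' c f hf := by simpa [mul_sub] using hf.const_mul c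

lemma mem_contAtInfinity_iff : f ∈ contAtInfinity M ↔
    ∀ η > 0, ∃ N, ∀ g g', N ≤ gromov M g g' 1 → |f g - f g'| < η := by
  change Tendsto _ _ _ ↔ _
  simp [(atTop_basis.comap fun p : Γ × Γ => gromov M p.1 p.2 1).tendsto_iff
    Metric.nhds_basis_ball, dist_zero_right]

lemma one_mem_contAtInfinity : (1 : Γ → ℝ) ∈ contAtInfinity M :=
  mem_contAtInfinity_iff.mpr fun η hη => ⟨0, fun _ _ _ => by simpa using hη⟩

lemma exists_le_two_mul_of_mem_contAtInfinity (hf : f ∈ contAtInfinity M) {a : ℝ} (ha : 0 < a)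
    (haf : ∀ g, a ≤ f g) : ∃ N, 0 ≤ N ∧ ∀ g g', N ≤ gromov M g g' 1 → f g ≤ 2 * f g' := by
  obtain ⟨N, hN⟩ := mem_contAtInfinity_iff.mp hf a ha
  refine ⟨max N 0, le_max_right _ _, fun g g' h => ?_⟩
  linarith [haf g', (abs_lt.mp (hN g g' ((le_max_left _ _).trans h))).2]

-- Mere hyperbolicity would only bound these increments, not make them tend to zero.
lemma mul_gromov_sub_gromov_le {ε : ℝ} (hε : 0 < ε)
    (h : ∀ x y z o : Γ, Real.exp (-ε * gromov M x y o) ≤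
      Real.exp (-ε * gromov M x z o) + Real.exp (-ε * gromov M z y o)) (γ g g' : Γ) :
    ε * (gromov M γ g 1 - gromov M γ g' 1) ≤
      Real.exp (ε * M.d γ 1) * Real.exp (-ε * gromov M g g' 1) := by
  have hexp : Real.exp (ε * (gromov M γ g 1 - gromov M γ g' 1)) ≤
      1 + Real.exp (ε * gromov M γ g 1) * Real.exp (-ε * gromov M g g' 1) :=
    calc Real.exp (ε * (gromov M γ g 1 - gromov M γ g' 1))
        = Real.exp (ε * gromov M γ g 1) * Real.exp (-ε * gromov M γ g' 1) := by
          rw [← Real.exp_add]; ring_nf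
      _ ≤ Real.exp (ε * gromov M γ g 1) * (Real.exp (-ε * gromov M γ g 1) +
            Real.exp (-ε * gromov M g g' 1)) := by gcongr; exact h γ g' g 1
      _ = _ := by rw [mul_add, ← Real.exp_add, neg_mul, add_neg_cancel, Real.exp_zero]
  calc ε * (gromov M γ g 1 - gromov M γ g' 1)
      ≤ Real.exp (ε * gromov M γ g 1) * Real.exp (-ε * gromov M g g' 1) := by
        linarith [Real.add_one_le_exp (ε * (gromov M γ g 1 - gromov M γ g' 1))]
    _ ≤ _ := by gcongr; exact gromov_le_left γ g 1

lemma busemannKernel_sub_le (ht : 0 ≤ t) {γ g g' : Γ} {b : ℝ} (hb : 0 ≤ b)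
    (hgromov : gromov M γ g 1 - gromov M γ g' 1 ≤ b) :
    busemannKernel M t γ g - busemannKernel M t γ g' ≤ Real.exp (t * M.d γ 1) * (2 * t * b) := by
  set u := 2 * t * (gromov M γ g 1 - gromov M γ g' 1) with hu
  have hratio : busemannKernel M t γ g' = busemannKernel M t γ g * Real.exp (-u) := by
    rw [busemannKernel_eq_exp_gromov, busemannKernel_eq_exp_gromov, ← Real.exp_add, hu]
    ring_nf
  calc busemannKernel M t γ g - busemannKernel M t γ g'
      = busemannKernel M t γ g * (1 - Real.exp (-u)) := by rw [hratio]; ring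
    _ ≤ busemannKernel M t γ g * (2 * t * b) := by
        refine mul_le_mul_of_nonneg_left ?_ (busemannKernel_pos γ g).le
        have hub : u ≤ 2 * t * b := mul_le_mul_of_nonneg_left hgromov (by positivity)
        linarith [Real.add_one_le_exp (-u)]
    _ ≤ Real.exp (t * M.d γ 1) * (2 * t * b) := by
        gcongr
        exact busemannKernel_le ht γ g

lemma busemannKernel_mem_contAtInfinity (hhyp : IsStronglyHyperbolic M) (ht : 0 ≤ t) (γ : Γ) :
    busemannKernel M t γ ∈ contAtInfinity M := by
  obtain ⟨ε, hε, h⟩ := hhyp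
  have hbound : ∀ g g', busemannKernel M t γ g - busemannKernel M t γ g' ≤
      Real.exp (t * M.d γ 1) * (2 * t * (Real.exp (ε * M.d γ 1) / ε *
        Real.exp (-ε * gromov M g g' 1))) := fun g g' => by
    refine busemannKernel_sub_le ht (by positivity) ?_
    rw [div_mul_eq_mul_div, le_div_iff₀' hε]
    exact mul_gromov_sub_gromov_le hε h γ g g'
  have hgromov : Tendsto (fun p : Γ × Γ => gromov M p.1 p.2 1)
      (comap (fun p => gromov M p.1 p.2 1) atTop) atTop := tendsto_comap
  have hexp : Tendsto (fun p : Γ × Γ => Real.exp (-ε * gromov M p.1 p.2 1))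
      (comap (fun p => gromov M p.1 p.2 1) atTop) (nhds 0) :=
    Real.tendsto_exp_atBot.comp (hgromov.const_mul_atTop_of_neg (neg_lt_zero.mpr hε))
  refine squeeze_zero_norm (fun p => abs_sub_le_iff.mpr ⟨hbound p.1 p.2, ?_⟩)
    (by simpa using (((hexp.const_mul (Real.exp (ε * M.d γ 1) / ε)).const_mul (2 * t)).const_mul
      (Real.exp (t * M.d γ 1))))
  rw [gromov_comm p.1]
  exact hbound p.2 p.1

end ContinuityAtInfinity

section BusemannSum

variable {M : InvMetric Γ} {t : ℝ}

/-- The function `∑_γ μ(γ) e^{-t (d(g, γ) - d(g, 1))}` of `g`: the discrete Poisson integral of a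
finitely supported weight `μ`. -/
noncomputable def busemannSum (M : InvMetric Γ) (t : ℝ) : (Γ →₀ ℝ) →ₗ[ℝ] (Γ → ℝ) :=
  Finsupp.linearCombination ℝ (busemannKernel M t)

lemma busemannSum_apply (μ : Γ →₀ ℝ) (g : Γ) :
    busemannSum M t μ g = ∑ γ ∈ μ.support, μ γ * busemannKernel M t γ g := by
  simp [busemannSum, Finsupp.linearCombination_apply, Finsupp.sum, Finset.sum_apply]

lemma busemannSum_nonneg {μ : Γ →₀ ℝ} (hμ : 0 ≤ μ) (g : Γ) : 0 ≤ busemannSum M t μ g := by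
  rw [busemannSum_apply]
  exact Finset.sum_nonneg fun γ _ => mul_nonneg (hμ γ) (busemannKernel_pos γ g).le

lemma busemannSum_mem_contAtInfinity (hhyp : IsStronglyHyperbolic M) (ht : 0 ≤ t)
    (μ : Γ →₀ ℝ) : busemannSum M t μ ∈ contAtInfinity M := by
  rw [busemannSum, Finsupp.linearCombination_apply]
  exact Submodule.sum_mem _ fun γ _ =>
    Submodule.smul_mem _ _ (busemannKernel_mem_contAtInfinity hhyp ht γ)

lemma busemannSum_indicator (A : Finset Γ) (f : Γ → ℝ) (g : Γ) :
    busemannSum M t (Finsupp.indicator A fun γ _ => f γ) g =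
      ∑ γ ∈ A, f γ * busemannKernel M t γ g := by
  classical
  rw [Finsupp.indicator_eq_sum_single]
  simp [busemannSum, map_sum, Finset.sum_apply]

/-- The restriction of a function to the ball of radius `r`, as a finitely supported function. -/
noncomputable def ballRestrict (M : InvMetric Γ) (f : Γ → ℝ) (r : ℝ) : Γ →₀ ℝ :=
  Finsupp.indicator (M.ball r) fun γ _ => f γ

lemma ballRestrict_nonneg {f : Γ → ℝ} (hf : ∀ g, 0 ≤ f g) (r : ℝ) : 0 ≤ ballRestrict M f r :=
  fun γ => by
    classical
    simp only [ballRestrict, Finsupp.indicator_apply]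
    split_ifs
    exacts [hf γ, le_rfl]

end BusemannSum

section Discretization

variable {M : InvMetric Γ} {t : ℝ}

lemma exists_busemannSum_ballRestrict_le (hhyp : IsHyperbolic M) (hrg : IsRoughlyGeodesic M)
    (ht : 0 < t) (hs : Summable fun g => Real.exp (-(3 / 2 * t) * M.d g 1)) :
    ∃ K : ℝ, 0 < K ∧ ∀ (f : Γ → ℝ) (N r : ℝ), 0 ≤ N → 0 ≤ r → (∀ g, 0 ≤ f g) → (∀ g, f g ≤ 1) →
      (∀ γ g, N ≤ gromov M γ g 1 → f γ ≤ 2 * f g) → ∀ g, busemannSum M t (ballRestrict M f r) g ≤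
        K * (2 * f g * Real.exp (t * r) + Real.exp (t / 2 * (r + N))) := by
  classical
  obtain ⟨K, hK, hsum⟩ := exists_sum_busemannKernel_le (t := t) hhyp hrg (by linarith)
    (by linarith) hs
  refine ⟨K, hK, fun f N r hN hr hf0 hf1 hfN g => ?_⟩
  have hball : ∀ (p : Γ → Prop) [DecidablePred p], ∀ γ ∈ (M.ball r).filter p, M.d γ 1 ≤ r :=
    fun p _ γ hγ => M.mem_ball.mp (Finset.mem_filter.mp hγ).1
  have hclose : ∑ γ ∈ M.ball r with N ≤ gromov M γ g 1, f γ * busemannKernel M t γ g ≤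
      2 * f g * (K * Real.exp (t * r)) :=
    calc ∑ γ ∈ M.ball r with N ≤ gromov M γ g 1, f γ * busemannKernel M t γ g
        ≤ ∑ γ ∈ M.ball r with N ≤ gromov M γ g 1, 2 * f g * busemannKernel M t γ g :=
          Finset.sum_le_sum fun γ hγ => mul_le_mul_of_nonneg_right
            (hfN γ g (Finset.mem_filter.mp hγ).2) (busemannKernel_pos γ g).le
      _ ≤ 2 * f g * (K * Real.exp ((3 / 2 * t - t) * r + (2 * t - 3 / 2 * t) * r)) := by
          rw [← Finset.mul_sum]
          exact mul_le_mul_of_nonneg_left (hsum r r g _ hr (hball _) fun γ hγ =>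
            (gromov_le_left γ g 1).trans (hball _ γ hγ)) (mul_nonneg zero_le_two (hf0 g))
      _ = 2 * f g * (K * Real.exp (t * r)) := by ring_nf
  have hdistant : ∑ γ ∈ M.ball r with ¬ N ≤ gromov M γ g 1, f γ * busemannKernel M t γ g ≤
      K * Real.exp (t / 2 * (r + N)) :=
    calc ∑ γ ∈ M.ball r with ¬ N ≤ gromov M γ g 1, f γ * busemannKernel M t γ g
        ≤ ∑ γ ∈ M.ball r with ¬ N ≤ gromov M γ g 1, busemannKernel M t γ g :=
          Finset.sum_le_sum fun γ _ => mul_le_of_le_one_left (busemannKernel_pos γ g).le (hf1 γ)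
      _ ≤ K * Real.exp ((3 / 2 * t - t) * r + (2 * t - 3 / 2 * t) * N) :=
          hsum r N g _ hN (hball _) fun γ hγ => (not_le.mp (Finset.mem_filter.mp hγ).2).le
      _ = K * Real.exp (t / 2 * (r + N)) := by ring_nf
  rw [ballRestrict, busemannSum_indicator,
    ← Finset.sum_filter_add_sum_filter_not _ (N ≤ gromov M · g 1)]
  linarith

lemma exists_le_busemannSum_ballRestrict (hrg : IsRoughlyGeodesic M) (ht : 0 ≤ t) :
    ∃ C : ℝ, 0 ≤ C ∧ ∀ (f : Γ → ℝ) (N r : ℝ), 0 ≤ N → N + 2 * C ≤ r → (∀ g, 0 ≤ f g) →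
      (∀ γ g, N ≤ gromov M γ g 1 → f γ ≤ 2 * f g) → ∀ g, r ≤ M.d g 1 →
        Real.exp (t * (r - 2 * C)) * (f g / 2) ≤ busemannSum M t (ballRestrict M f r) g := by
  obtain ⟨C, hC, hgeod⟩ := hrg
  refine ⟨C, hC, fun f N r hN hr hf0 hfN g hg => ?_⟩
  obtain ⟨z, h1z, hzg⟩ := hgeod 1 g (r - C) (by linarith) (by rw [M.symm]; linarith)
  rw [M.symm 1 z, abs_le] at h1z
  rw [M.symm 1 g, M.symm z g, abs_le] at hzg
  have hgromov : N ≤ gromov M g z 1 := by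
    unfold gromov
    linarith
  have hkernel : Real.exp (t * (r - 2 * C)) ≤ busemannKernel M t z g := by
    rw [busemannKernel, Real.exp_le_exp, neg_mul, ← mul_neg]
    exact mul_le_mul_of_nonneg_left (by linarith) ht
  calc Real.exp (t * (r - 2 * C)) * (f g / 2)
      ≤ busemannKernel M t z g * f z :=
        mul_le_mul hkernel (by linarith [hfN g z hgromov]) (by linarith [hf0 g])
          (busemannKernel_pos z g).le
    _ = f z * busemannKernel M t z g := mul_comm _ _
    _ ≤ ∑ γ ∈ M.ball r, f γ * busemannKernel M t γ g :=
        Finset.single_le_sum (f := fun γ => f γ * busemannKernel M t γ g)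
          (fun γ _ => mul_nonneg (hf0 γ) (busemannKernel_pos γ g).le)
          (M.mem_ball.mpr (by linarith))
    _ = _ := by rw [ballRestrict, busemannSum_indicator]

lemma eventually_exp_half_mul_add_le (ht : 0 < t) {a : ℝ} (ha : 0 < a) (N : ℝ) :
    ∀ᶠ r in atTop, Real.exp (t / 2 * (r + N)) ≤ a * Real.exp (t * r) := by
  have hlim : Tendsto (fun r => Real.exp (t / 2 * (N - r))) atTop (nhds 0) :=
    Real.tendsto_exp_atBot.comp ((tendsto_atBot_add_const_left atTop N tendsto_neg_atTop_atBot)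
      |>.const_mul_atBot (half_pos ht))
  filter_upwards [hlim.eventually_le_const ha] with r hr
  calc Real.exp (t / 2 * (r + N)) = Real.exp (t / 2 * (N - r)) * Real.exp (t * r) := by
        rw [← Real.exp_add]; ring_nf
    _ ≤ a * Real.exp (t * r) := by gcongr

lemma exists_busemannSum_comparable (hhyp : IsHyperbolic M) (hrg : IsRoughlyGeodesic M)
    (ht : 0 < t) (hs : Summable fun g => Real.exp (-(3 / 2 * t) * M.d g 1)) :
    ∃ c : ℝ, 0 < c ∧ ∀ f ∈ contAtInfinity M, ∀ a > 0, (∀ g, a ≤ f g) → (∀ g, f g ≤ 1) →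
      ∃ ν : Γ →₀ ℝ, 0 ≤ ν ∧ (∀ g, busemannSum M t ν g ≤ f g / 2) ∧
        ∀ᶠ g in cofinite, c * f g ≤ busemannSum M t ν g := by
  obtain ⟨K, hK, hupper⟩ := exists_busemannSum_ballRestrict_le hhyp hrg ht hs
  obtain ⟨C, hC, hlower⟩ := exists_le_busemannSum_ballRestrict hrg ht.le
  refine ⟨Real.exp (-(2 * t * C)) / (12 * K), by positivity, fun f hf a ha haf hf1 => ?_⟩
  have hf0 : ∀ g, 0 ≤ f g := fun g => ha.le.trans (haf g)
  obtain ⟨N, hN, hfN⟩ := exists_le_two_mul_of_mem_contAtInfinity hf ha haf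
  obtain ⟨r, har, hr⟩ :=
    ((eventually_exp_half_mul_add_le ht ha N).and (eventually_ge_atTop (N + 2 * C))).exists
  have hscale : 0 ≤ Real.exp (-(t * r)) / (6 * K) := by positivity
  have hcancel : Real.exp (-(t * r)) * Real.exp (t * r) = 1 := by rw [← Real.exp_add]; simp
  refine ⟨(Real.exp (-(t * r)) / (6 * K)) • ballRestrict M f r,
    smul_nonneg hscale (ballRestrict_nonneg hf0 r), fun g => ?_, ?_⟩
  · rw [map_smul, Pi.smul_apply, smul_eq_mul]
    calc Real.exp (-(t * r)) / (6 * K) * busemannSum M t (ballRestrict M f r) g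
        ≤ Real.exp (-(t * r)) / (6 * K) * (K * (2 * f g * Real.exp (t * r) +
            f g * Real.exp (t * r))) := by
          gcongr
          refine (hupper f N r hN (by linarith) hf0 hf1 hfN g).trans ?_
          gcongr
          exact har.trans (by gcongr; exact haf g)
      _ = Real.exp (-(t * r)) * Real.exp (t * r) * (f g / 2) := by field_simp; ring
      _ = f g / 2 := by rw [hcancel, one_mul]
  · filter_upwards [M.eventually_cofinite_le_d r] with g hg
    rw [map_smul, Pi.smul_apply, smul_eq_mul]
    calc Real.exp (-(2 * t * C)) / (12 * K) * f g
        = Real.exp (-(t * r)) / (6 * K) * (Real.exp (t * (r - 2 * C)) * (f g / 2)) := by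
          rw [show -(2 * t * C) = -(t * r) + t * (r - 2 * C) by ring, Real.exp_add]
          field_simp
          ring
      _ ≤ _ := by
          gcongr
          exact hlower f N r hN hr hf0 hfN g hg

lemma exists_busemannSum_add (hhyp : IsStronglyHyperbolic M) (hrg : IsRoughlyGeodesic M)
    (ht : 0 < t) (hs : Summable fun g => Real.exp (-(3 / 2 * t) * M.d g 1)) :
    ∃ c : ℝ, 0 < c ∧ c < 1 ∧ ∀ μ : Γ →₀ ℝ, 0 ≤ μ → ∀ a > 0, (∀ g, busemannSum M t μ g ≤ 1 - a) →
      ∃ μ' ≥ μ, (∀ g, busemannSum M t μ' g ≤ 1 - a / 2) ∧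
        ∀ᶠ g in cofinite, 1 - busemannSum M t μ' g ≤ (1 - c) * (1 - busemannSum M t μ g) := by
  obtain ⟨c, hc, hcomp⟩ := exists_busemannSum_comparable hhyp.isHyperbolic hrg ht hs
  refine ⟨min c (1 / 2), lt_min hc one_half_pos, min_lt_of_right_lt one_half_lt_one,
    fun μ hμ a ha hμa => ?_⟩
  obtain ⟨ν, hν, hνle, hνge⟩ := hcomp (1 - busemannSum M t μ)
    (Submodule.sub_mem _ one_mem_contAtInfinity (busemannSum_mem_contAtInfinity hhyp ht.le μ)) a ha
    (fun g => le_sub_comm.mp (hμa g)) (fun g => sub_le_self 1 (busemannSum_nonneg hμ g))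
  simp only [Pi.sub_apply, Pi.one_apply] at hνle hνge
  refine ⟨μ + ν, le_add_of_nonneg_right hν, fun g => ?_, ?_⟩
  · rw [map_add, Pi.add_apply]
    linarith [hνle g, hμa g]
  · filter_upwards [hνge] with g hg
    have hmin : min c (1 / 2) * (1 - busemannSum M t μ g) ≤ c * (1 - busemannSum M t μ g) :=
      mul_le_mul_of_nonneg_right (min_le_left _ _) (by linarith [hμa g])
    rw [map_add, Pi.add_apply]
    linarith

lemma exists_eventually_one_sub_le_busemannSum (hhyp : IsStronglyHyperbolic M)
    (hrg : IsRoughlyGeodesic M) (ht : 0 < t)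
    (hs : Summable fun g => Real.exp (-(3 / 2 * t) * M.d g 1)) {μ₀ : Γ →₀ ℝ} (hμ₀ : 0 ≤ μ₀)
    {a : ℝ} (ha : 0 < a) (hμ₀a : ∀ g, busemannSum M t μ₀ g ≤ 1 - a) {η : ℝ} (hη : 0 < η) :
    ∃ μ ≥ μ₀, (∀ g, busemannSum M t μ g ≤ 1) ∧
      ∀ᶠ g in cofinite, 1 - η ≤ busemannSum M t μ g := by
  obtain ⟨c, hc0, hc1, hadd⟩ := exists_busemannSum_add hhyp hrg ht hs
  have hiter : ∀ k : ℕ, ∃ μ ≥ μ₀, ∃ b > 0, (∀ g, busemannSum M t μ g ≤ 1 - b) ∧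
      ∀ᶠ g in cofinite, 1 - busemannSum M t μ g ≤ (1 - c) ^ k := by
    intro k
    induction k with
    | zero =>
      exact ⟨μ₀, le_rfl, a, ha, hμ₀a, .of_forall fun g => by
        simpa using busemannSum_nonneg hμ₀ g⟩
    | succ k ih =>
      obtain ⟨μ, hμ₀μ, b, hb, hμb, hμk⟩ := ih
      obtain ⟨μ', hμμ', hμ'b, hμ'⟩ := hadd μ (hμ₀.trans hμ₀μ) b hb hμb
      refine ⟨μ', hμ₀μ.trans hμμ', b / 2, half_pos hb, hμ'b, ?_⟩
      filter_upwards [hμk, hμ'] with g hgk hg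
      rw [pow_succ']
      exact hg.trans (mul_le_mul_of_nonneg_left hgk (by linarith))
  obtain ⟨k, hk⟩ := exists_pow_lt_of_lt_one hη (show 1 - c < 1 by linarith)
  obtain ⟨μ, hμ₀μ, b, hb, hμb, hμk⟩ := hiter k
  refine ⟨μ, hμ₀μ, fun g => by linarith [hμb g], ?_⟩
  filter_upwards [hμk] with g hg
  linarith

lemma exists_forall_mem_le_busemannSum_le_half (ht : 0 ≤ t) (S : Finset Γ) :
    ∃ c : ℝ, 0 < c ∧ ∃ μ : Γ →₀ ℝ, 0 ≤ μ ∧ (∀ s ∈ S, c ≤ μ s) ∧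
      ∀ g, busemannSum M t μ g ≤ 1 / 2 := by
  classical
  set Z := ∑ γ ∈ S, Real.exp (t * M.d γ 1)
  have hZ : 0 ≤ Z := Finset.sum_nonneg fun _ _ => (Real.exp_pos _).le
  set c := (2 * (1 + Z))⁻¹ with hc
  have hc0 : 0 < c := by positivity
  refine ⟨c, hc0, Finsupp.indicator S fun _ _ => c, fun γ => ?_, fun s hs => ?_, fun g => ?_⟩
  · simp only [Finsupp.indicator_apply]
    split_ifs
    exacts [hc0.le, le_rfl]
  · rw [Finsupp.indicator_of_mem hs]
  · calc busemannSum M t (Finsupp.indicator S fun _ _ => c) g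
        = c * ∑ γ ∈ S, busemannKernel M t γ g := by rw [busemannSum_indicator, Finset.mul_sum]
      _ ≤ c * (1 + Z) := by
          gcongr
          exact (Finset.sum_le_sum fun γ _ => busemannKernel_le ht γ g).trans
            (le_add_of_nonneg_left zero_le_one)
      _ = 1 / 2 := by rw [hc]; field_simp

end Discretization

section LeftConvolution

variable {M : InvMetric Γ} {w : Γ → ℝ} {μ : Γ →₀ ℝ}

/-- The convolution `μ * w` of a finitely supported function with a function on the group. -/
noncomputable def leftConv (μ : Γ →₀ ℝ) (w : Γ → ℝ) (g : Γ) : ℝ :=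
  ∑ γ ∈ μ.support, μ γ * w (γ⁻¹ * g)

lemma leftConv_nonneg (hμ : 0 ≤ μ) (hw : ∀ g, 0 ≤ w g) (g : Γ) : 0 ≤ leftConv μ w g :=
  Finset.sum_nonneg fun γ _ => mul_nonneg (hμ γ) (hw _)

lemma leftConv_mono (hμ : 0 ≤ μ) {w' : Γ → ℝ} (h : ∀ g, w g ≤ w' g) (g : Γ) :
    leftConv μ w g ≤ leftConv μ w' g :=
  Finset.sum_le_sum fun γ _ => mul_le_mul_of_nonneg_left (h _) (hμ γ)

lemma leftConv_const_mul (c : ℝ) (g : Γ) :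
    leftConv μ (fun h => c * w h) g = c * leftConv μ w g := by
  simp only [leftConv, Finset.mul_sum, mul_left_comm]

lemma sum_le_of_leftConv_le (hws : Summable w) (hw : ∀ g, 0 < w g) {c : ℝ}
    (h : ∀ g, leftConv μ w g ≤ c * w g) : ∑ γ ∈ μ.support, μ γ ≤ c := by
  have htranslate : ∀ γ : Γ, HasSum (fun g => w (γ⁻¹ * g)) (∑' g, w g) := fun γ =>
    (Equiv.mulLeft γ⁻¹).hasSum_iff.mpr hws.hasSum
  have hconv : HasSum (leftConv μ w) (∑ γ ∈ μ.support, μ γ * ∑' g, w g) :=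
    hasSum_sum fun γ _ => (htranslate γ).mul_left _
  have hle := hasSum_le h hconv (hws.hasSum.mul_left c)
  rw [← Finset.sum_mul] at hle
  exact le_of_mul_le_mul_right hle (hws.tsum_pos (fun g => (hw g).le) 1 (hw 1))

lemma leftConv_exp (t : ℝ) (μ : Γ →₀ ℝ) (g : Γ) :
    leftConv μ (fun h => Real.exp (-t * M.d h 1)) g =
      busemannSum M t μ g * Real.exp (-t * M.d g 1) := by
  rw [leftConv, busemannSum_apply, Finset.sum_mul]
  refine Finset.sum_congr rfl fun γ _ => ?_
  rw [busemannKernel, M.d_inv_mul_one, mul_assoc, ← Real.exp_add]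
  ring_nf

end LeftConvolution

section CutoffWeight

variable {M : InvMetric Γ} {t α R ρ : ℝ}

/-- The weight `e^{-F(d(g, 1))}`, where `F` has slope `t - α` on `[0, R]` and `t + α` beyond. As
in Patterson's construction, it agrees with `e^{-t d(g, 1)}` up to a slowly varying factor, is
summable for `t = δ`, and has large `φ`-mass when `R` is large and `t ≤ δ(φ)`. -/
noncomputable def cutoffWeight (M : InvMetric Γ) (t α R : ℝ) (g : Γ) : ℝ :=
  Real.exp (-t * M.d g 1 + α * (R - |M.d g 1 - R|))

lemma cutoffWeight_pos (g : Γ) : 0 < cutoffWeight M t α R g := Real.exp_pos _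

lemma cutoffWeight_of_le {g : Γ} (h : M.d g 1 ≤ R) :
    cutoffWeight M t α R g = Real.exp (-(t - α) * M.d g 1) := by
  rw [cutoffWeight, abs_of_nonpos (by linarith)]
  ring_nf

lemma cutoffWeight_le_one (hα : 0 ≤ α) (hαt : α ≤ t) (g : Γ) : cutoffWeight M t α R g ≤ 1 := by
  rw [cutoffWeight, Real.exp_le_one_iff]
  nlinarith [M.d_nonneg g 1, neg_abs_le (M.d g 1 - R)]

lemma summable_cutoffWeight (hne : 0 < growthExp M) (hα : 0 ≤ α) (hαt : growthExp M < t + α) :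
    Summable (cutoffWeight M t α R) := by
  refine ((summable_exp_of_growthExp_lt hne hαt).mul_left (Real.exp (2 * α * R))).of_nonneg_of_le
    (fun g => (cutoffWeight_pos g).le) fun g => ?_
  rw [cutoffWeight, ← Real.exp_add, Real.exp_le_exp]
  nlinarith [le_abs_self (M.d g 1 - R)]

lemma abs_abs_d_sub_sub_abs_d_sub_le (γ g : Γ) :
    |(|M.d g 1 - R| - |M.d (γ⁻¹ * g) 1 - R|)| ≤ M.d γ 1 := by
  rw [M.d_inv_mul_one]
  refine (abs_abs_sub_abs_le_abs_sub _ _).trans (abs_le.mpr ?_)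
  have hg1 := M.triangle g γ 1
  have hgγ := M.triangle g 1 γ
  rw [M.symm 1 γ] at hgγ
  constructor <;> linarith

lemma cutoffWeight_translate_le (hα : 0 ≤ α) {γ : Γ} (hγ : M.d γ 1 ≤ ρ) (g : Γ) :
    cutoffWeight M t α R (γ⁻¹ * g) ≤
      Real.exp (α * ρ) * (busemannKernel M t γ g * cutoffWeight M t α R g) := by
  have h := mul_le_mul_of_nonneg_left
    ((le_abs_self _).trans ((abs_abs_d_sub_sub_abs_d_sub_le (R := R) γ g).trans hγ)) hα
  rw [M.d_inv_mul_one] at h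
  rw [cutoffWeight, cutoffWeight, busemannKernel, M.d_inv_mul_one, ← Real.exp_add,
    ← Real.exp_add, Real.exp_le_exp]
  linarith

lemma le_cutoffWeight_translate (hα : 0 ≤ α) {γ : Γ} (hγ : M.d γ 1 ≤ ρ) (g : Γ) :
    Real.exp (-(α * ρ)) * (busemannKernel M t γ g * cutoffWeight M t α R g) ≤
      cutoffWeight M t α R (γ⁻¹ * g) := by
  have h := mul_le_mul_of_nonneg_left
    ((neg_le_abs _).trans ((abs_abs_d_sub_sub_abs_d_sub_le (R := R) γ g).trans hγ)) hα
  rw [M.d_inv_mul_one] at h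
  rw [cutoffWeight, cutoffWeight, busemannKernel, M.d_inv_mul_one, ← Real.exp_add,
    ← Real.exp_add, Real.exp_le_exp]
  linarith

variable {μ : Γ →₀ ℝ}

lemma leftConv_cutoffWeight_le (hα : 0 ≤ α) (hμ : 0 ≤ μ) (hρ : ∀ γ ∈ μ.support, M.d γ 1 ≤ ρ)
    (g : Γ) : leftConv μ (cutoffWeight M t α R) g ≤
      Real.exp (α * ρ) * (busemannSum M t μ g * cutoffWeight M t α R g) := by
  rw [leftConv, busemannSum_apply, Finset.sum_mul, Finset.mul_sum]
  refine Finset.sum_le_sum fun γ hγ => ?_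
  rw [mul_assoc, mul_left_comm]
  exact mul_le_mul_of_nonneg_left (cutoffWeight_translate_le hα (hρ γ hγ) g) (hμ γ)

lemma le_leftConv_cutoffWeight (hα : 0 ≤ α) (hμ : 0 ≤ μ) (hρ : ∀ γ ∈ μ.support, M.d γ 1 ≤ ρ)
    (g : Γ) : Real.exp (-(α * ρ)) * (busemannSum M t μ g * cutoffWeight M t α R g) ≤
      leftConv μ (cutoffWeight M t α R) g := by
  rw [leftConv, busemannSum_apply, Finset.sum_mul, Finset.mul_sum]
  refine Finset.sum_le_sum fun γ hγ => ?_
  rw [mul_assoc, mul_left_comm]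
  exact mul_le_mul_of_nonneg_left (le_cutoffWeight_translate hα (hρ γ hγ) g) (hμ γ)

lemma exists_pos_le_exp_mul_close_one {a η : ℝ} (ha : 0 < a) (ρ : ℝ) (hη : 0 < η) :
    ∃ α, 0 < α ∧ α ≤ a ∧ Real.exp (α * ρ) ≤ 1 + η ∧ 1 - η / 2 ≤ Real.exp (-(α * ρ)) := by
  have hpos : Tendsto (fun α => Real.exp (α * ρ)) (nhds 0) (nhds 1) := by
    simpa using (show Continuous fun α => Real.exp (α * ρ) by fun_prop).tendsto 0
  have hneg : Tendsto (fun α => Real.exp (-(α * ρ))) (nhds 0) (nhds 1) := by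
    simpa using (show Continuous fun α => Real.exp (-(α * ρ)) by fun_prop).tendsto 0
  have hIoc : ∀ᶠ α in nhdsWithin 0 (Set.Ioi 0), α ∈ Set.Ioc 0 a := Ioc_mem_nhdsGT ha
  have hexp := (hpos.eventually_le_const (lt_add_of_pos_right 1 hη)).and
    (hneg.eventually_const_le (sub_lt_self 1 (half_pos hη)))
  obtain ⟨α, ⟨hα, hαa⟩, hle, hge⟩ := (hIoc.and (hexp.filter_mono nhdsWithin_le_nhds)).exists
  exact ⟨α, hα, hαa, hle, hge⟩

lemma exists_almost_stationary_weight (hne : 0 < growthExp M) {f : Γ → ℝ} (hf : ∀ g, 0 ≤ f g)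
    (hcrit : growthExp M ≤ critExp M f) (hμ : 0 ≤ μ)
    (hμ1 : ∀ g, busemannSum M (growthExp M) μ g ≤ 1) {η : ℝ} (hη : 0 < η) (hη1 : η ≤ 1) (L : ℝ) :
    ∃ w : Γ → ℝ, Summable w ∧ (∀ g, 0 < w g) ∧ (∀ g, w g ≤ 1) ∧
      (∀ g, leftConv μ w g ≤ (1 + η) * w g) ∧
      (∀ g, 1 - η / 2 ≤ busemannSum M (growthExp M) μ g → (1 - η) * w g ≤ leftConv μ w g) ∧
      ∃ A : Finset Γ, L < ∑ g ∈ A, w g * f g := by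
  obtain ⟨ρ, hρ⟩ := M.exists_forall_mem_d_le μ.support
  obtain ⟨α, hα, hαδ, hexp, hexp'⟩ := exists_pos_le_exp_mul_close_one hne ρ hη
  obtain ⟨A, hA⟩ := exists_lt_sum_of_lt_critExp hf (sub_nonneg.mpr hαδ)
    ((sub_lt_self _ hα).trans_le hcrit) L
  obtain ⟨R, hR⟩ := M.exists_forall_mem_d_le A
  set w := cutoffWeight M (growthExp M) α R
  have hw : ∀ g, 0 < w g := cutoffWeight_pos
  refine ⟨w, summable_cutoffWeight hne hα.le (lt_add_of_pos_right _ hα), hw,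
    cutoffWeight_le_one hα.le hαδ, fun g => ?_, fun g hg => ?_, A, ?_⟩
  · calc leftConv μ w g
        ≤ Real.exp (α * ρ) * (busemannSum M (growthExp M) μ g * w g) :=
          leftConv_cutoffWeight_le hα.le hμ hρ g
      _ ≤ (1 + η) * w g := mul_le_mul hexp (mul_le_of_le_one_left (hw g).le (hμ1 g))
          (mul_nonneg (busemannSum_nonneg hμ g) (hw g).le) (by linarith)
  · calc (1 - η) * w g ≤ (1 - η / 2) * (1 - η / 2) * w g := by
          refine mul_le_mul_of_nonneg_right ?_ (hw g).le
          linarith [mul_self_nonneg (η / 2)]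
      _ ≤ Real.exp (-(α * ρ)) * busemannSum M (growthExp M) μ g * w g :=
          mul_le_mul_of_nonneg_right
            (mul_le_mul hexp' hg (by linarith) (Real.exp_pos _).le) (hw g).le
      _ = Real.exp (-(α * ρ)) * (busemannSum M (growthExp M) μ g * w g) := mul_assoc _ _ _
      _ ≤ leftConv μ w g := le_leftConv_cutoffWeight hα.le hμ hρ g
  · exact hA.trans_eq (Finset.sum_congr rfl fun g hg => by rw [← cutoffWeight_of_le (hR g hg)])

end CutoffWeight

section MatrixCoefficients

variable {H : Type*} [NormedAddCommGroup H] [InnerProductSpace ℝ H] {π : Γ →* (H ≃ₗᵢ[ℝ] H)} {v : H}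

/-- The diagonal matrix coefficient `g ↦ ⟨π(g)v, v⟩`, a positive definite function whose GNS
representation is `π` when `v` is cyclic. -/
noncomputable def matrixCoeff (π : Γ →* (H ≃ₗᵢ[ℝ] H)) (v : H) (g : Γ) : ℝ := ⟪π g v, v⟫

lemma abs_matrixCoeff_le (g : Γ) : |matrixCoeff π v g| ≤ ‖v‖ ^ 2 := by
  simpa [matrixCoeff, sq] using abs_real_inner_le_norm (π g v) v

lemma rep_mul_apply (g h : Γ) (x : H) : π (g * h) x = π g (π h x) := by
  rw [map_mul]
  rfl

lemma inner_orbit (g h : Γ) : ⟪π g v, π h v⟫ = matrixCoeff π v (h⁻¹ * g) := by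
  rw [matrixCoeff, ← (π h).inner_map_map (π (h⁻¹ * g) v), ← rep_mul_apply, mul_inv_cancel_left]

lemma opOf_apply (μ : Γ →₀ ℝ) (x : H) : opOf π μ x = ∑ γ ∈ μ.support, μ γ • π γ x := by
  simp [opOf]

/-- The vector `∑_{g ∈ F} w(g) π(g)v`. -/
noncomputable def orbitSum (π : Γ →* (H ≃ₗᵢ[ℝ] H)) (v : H) (F : Finset Γ) (w : Γ → ℝ) : H :=
  ∑ g ∈ F, w g • π g v

end MatrixCoefficients

section OrbitSum

variable {H : Type*} [NormedAddCommGroup H] [InnerProductSpace ℝ H] {π : Γ →* (H ≃ₗᵢ[ℝ] H)} {v : H}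
  {F : Finset Γ} {w : Γ → ℝ}

lemma inner_orbitSum (x : H) : ⟪orbitSum π v F w, x⟫ = ∑ g ∈ F, w g * ⟪π g v, x⟫ := by
  simp only [orbitSum, sum_inner, real_inner_smul_left]

lemma inner_map_orbitSum (γ : Γ) (x : H) :
    ⟪π γ (orbitSum π v F w), x⟫ = ∑ g ∈ F, w g * ⟪π (γ * g) v, x⟫ := by
  simp only [orbitSum, map_sum, map_smul, sum_inner, real_inner_smul_left, rep_mul_apply]

lemma inner_orbit_orbitSum_nonneg (hpos : ∀ g, 0 ≤ matrixCoeff π v g) (hw : ∀ g, 0 ≤ w g)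
    (k : Γ) : 0 ≤ ⟪π k v, orbitSum π v F w⟫ := by
  rw [real_inner_comm, inner_orbitSum]
  exact Finset.sum_nonneg fun g _ => mul_nonneg (hw g) (by rw [inner_orbit]; exact hpos _)

lemma inner_orbit_le (k : Γ) (x : H) : ⟪π k v, x⟫ ≤ ‖v‖ * ‖x‖ := by
  simpa using real_inner_le_norm (π k v) x

lemma sum_translate_mul_le_inner_map_orbitSum (hpos : ∀ g, 0 ≤ matrixCoeff π v g)
    (hw : ∀ g, 0 ≤ w g) {τ : ℝ} (hτ : ∀ A, Disjoint A F → ∑ g ∈ A, w g ≤ τ) (γ : Γ) :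
    ∑ k ∈ F, w (γ⁻¹ * k) * ⟪π k v, orbitSum π v F w⟫ ≤
      ⟪π γ (orbitSum π v F w), orbitSum π v F w⟫ + τ * (‖v‖ * ‖orbitSum π v F w‖) := by
  classical
  set ξ := orbitSum π v F w
  have hterm : ∀ g, 0 ≤ w g * ⟪π (γ * g) v, ξ⟫ := fun g =>
    mul_nonneg (hw g) (inner_orbit_orbitSum_nonneg hpos hw _)
  set G := F.image (γ⁻¹ * ·)
  have hreindex : ∑ k ∈ F, w (γ⁻¹ * k) * ⟪π k v, ξ⟫ = ∑ g ∈ G, w g * ⟪π (γ * g) v, ξ⟫ := by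
    rw [Finset.sum_image (mul_right_injective γ⁻¹).injOn]
    simp only [mul_inv_cancel_left]
  have houter : ∑ g ∈ G \ F, w g * ⟪π (γ * g) v, ξ⟫ ≤ τ * (‖v‖ * ‖ξ‖) :=
    calc ∑ g ∈ G \ F, w g * ⟪π (γ * g) v, ξ⟫ ≤ ∑ g ∈ G \ F, w g * (‖v‖ * ‖ξ‖) :=
          Finset.sum_le_sum fun g _ => mul_le_mul_of_nonneg_left (inner_orbit_le _ _) (hw g)
      _ = (∑ g ∈ G \ F, w g) * (‖v‖ * ‖ξ‖) := (Finset.sum_mul ..).symm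
      _ ≤ τ * (‖v‖ * ‖ξ‖) :=
          mul_le_mul_of_nonneg_right (hτ _ Finset.sdiff_disjoint) (by positivity)
  rw [hreindex, inner_map_orbitSum, ← Finset.sum_inter_add_sum_sdiff G F]
  exact add_le_add
    (Finset.sum_le_sum_of_subset_of_nonneg Finset.inter_subset_right fun g _ _ => hterm g) houter

lemma sum_leftConv_mul_le_inner_opOf_orbitSum (hpos : ∀ g, 0 ≤ matrixCoeff π v g)
    (hw : ∀ g, 0 ≤ w g) {μ : Γ →₀ ℝ} (hμ : 0 ≤ μ) {τ : ℝ}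
    (hτ : ∀ A, Disjoint A F → ∑ g ∈ A, w g ≤ τ) :
    ∑ k ∈ F, leftConv μ w k * ⟪π k v, orbitSum π v F w⟫ ≤
      ⟪opOf π μ (orbitSum π v F w), orbitSum π v F w⟫ +
        (∑ γ ∈ μ.support, μ γ) * (τ * (‖v‖ * ‖orbitSum π v F w‖)) := by
  set ξ := orbitSum π v F w
  calc ∑ k ∈ F, leftConv μ w k * ⟪π k v, ξ⟫
      = ∑ γ ∈ μ.support, μ γ * ∑ k ∈ F, w (γ⁻¹ * k) * ⟪π k v, ξ⟫ := by
        simp only [leftConv, Finset.sum_mul, Finset.mul_sum, mul_assoc]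
        exact Finset.sum_comm
    _ ≤ ∑ γ ∈ μ.support, μ γ * (⟪π γ ξ, ξ⟫ + τ * (‖v‖ * ‖ξ‖)) := Finset.sum_le_sum fun γ _ =>
        mul_le_mul_of_nonneg_left (sum_translate_mul_le_inner_map_orbitSum hpos hw hτ γ) (hμ γ)
    _ = ⟪opOf π μ ξ, ξ⟫ + (∑ γ ∈ μ.support, μ γ) * (τ * (‖v‖ * ‖ξ‖)) := by
        simp only [opOf_apply, sum_inner, real_inner_smul_left, mul_add, Finset.sum_add_distrib,
          Finset.sum_mul]

lemma le_inner_opOf_orbitSum (hpos : ∀ g, 0 ≤ matrixCoeff π v g) (hw : ∀ g, 0 ≤ w g)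
    (hw1 : ∀ g, w g ≤ 1) {μ : Γ →₀ ℝ} (hμ : 0 ≤ μ) {τ : ℝ}
    (hτ : ∀ A, Disjoint A F → ∑ g ∈ A, w g ≤ τ) {η : ℝ} (hη : 0 ≤ η) {E : Finset Γ}
    (hE : ∀ g ∉ E, (1 - η) * w g ≤ leftConv μ w g) :
    (1 - η) * ‖orbitSum π v F w‖ ^ 2 ≤
      ⟪opOf π μ (orbitSum π v F w), orbitSum π v F w⟫ +
        (E.card + (∑ γ ∈ μ.support, μ γ) * τ) * (‖v‖ * ‖orbitSum π v F w‖) := by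
  classical
  set ξ := orbitSum π v F w with hξ
  set c := ‖v‖ * ‖ξ‖
  have hp : ∀ k, 0 ≤ ⟪π k v, ξ⟫ := inner_orbit_orbitSum_nonneg hpos hw
  have hpointwise : ∀ k, (1 - η) * w k * ⟪π k v, ξ⟫ ≤
      leftConv μ w k * ⟪π k v, ξ⟫ + if k ∈ E then c else 0 := fun k => by
    split_ifs with hk
    · have hle : (1 - η) * w k ≤ 1 := by nlinarith [hw k, hw1 k]
      linarith [mul_le_mul_of_nonneg_right hle (hp k), inner_orbit_le (π := π) (v := v) k ξ,
        mul_nonneg (leftConv_nonneg hμ hw k) (hp k)]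
    · rw [add_zero]
      exact mul_le_mul_of_nonneg_right (hE k hk) (hp k)
  have hexceptional : ∑ k ∈ F, (if k ∈ E then c else 0) ≤ E.card * c := by
    rw [← Finset.sum_filter, Finset.sum_const, nsmul_eq_mul]
    gcongr
    exact fun k hk => (Finset.mem_filter.mp hk).2
  have hconv := sum_leftConv_mul_le_inner_opOf_orbitSum hpos hw hμ hτ
  calc (1 - η) * ‖ξ‖ ^ 2 = ∑ k ∈ F, (1 - η) * w k * ⟪π k v, ξ⟫ := by
        conv_lhs => rw [← real_inner_self_eq_norm_sq, hξ, inner_orbitSum, Finset.mul_sum]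
        simp only [← mul_assoc, hξ]
    _ ≤ ∑ k ∈ F, leftConv μ w k * ⟪π k v, ξ⟫ + ∑ k ∈ F, (if k ∈ E then c else 0) := by
        rw [← Finset.sum_add_distrib]
        exact Finset.sum_le_sum fun k _ => hpointwise k
    _ ≤ ⟪opOf π μ ξ, ξ⟫ + (E.card + (∑ γ ∈ μ.support, μ γ) * τ) * c := by linarith

lemma sum_mul_matrixCoeff_le_norm_orbitSum_mul (hpos : ∀ g, 0 ≤ matrixCoeff π v g)
    (hw : ∀ g, 0 ≤ w g) {A : Finset Γ} (hA : A ⊆ F) :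
    ∑ g ∈ A, w g * matrixCoeff π v g ≤ ‖orbitSum π v F w‖ * ‖v‖ :=
  calc ∑ g ∈ A, w g * matrixCoeff π v g ≤ ∑ g ∈ F, w g * matrixCoeff π v g :=
        Finset.sum_le_sum_of_subset_of_nonneg hA fun g _ _ => mul_nonneg (hw g) (hpos g)
    _ = ⟪orbitSum π v F w, v⟫ := (inner_orbitSum v).symm
    _ ≤ ‖orbitSum π v F w‖ * ‖v‖ := real_inner_le_norm _ v

end OrbitSum

section AlmostInvariantVectors

variable {H : Type*} [NormedAddCommGroup H] [InnerProductSpace ℝ H] {π : Γ →* (H ≃ₗᵢ[ℝ] H)}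

lemma sum_mul_norm_map_sub_sq (μ : Γ →₀ ℝ) (x : H) :
    ∑ γ ∈ μ.support, μ γ * ‖π γ x - x‖ ^ 2 =
      2 * ((∑ γ ∈ μ.support, μ γ) * ‖x‖ ^ 2 - ⟪opOf π μ x, x⟫) := by
  simp only [opOf_apply, sum_inner, real_inner_smul_left, Finset.sum_mul, Finset.mul_sum,
    ← Finset.sum_sub_distrib]
  refine Finset.sum_congr rfl fun γ _ => ?_
  rw [norm_sub_sq_real, LinearIsometryEquiv.norm_map]
  ring

lemma exists_norm_one_forall_norm_map_sub_lt {μ : Γ →₀ ℝ} (hμ : 0 ≤ μ) {S : Finset Γ} {c ε : ℝ}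
    (hc : 0 < c) (hS : ∀ s ∈ S, c ≤ μ s) (hε : 0 < ε) {x : H}
    (hx : 2 * ((∑ γ ∈ μ.support, μ γ) * ‖x‖ ^ 2 - ⟪opOf π μ x, x⟫) < c * (ε * ‖x‖) ^ 2) :
    ∃ u : H, ‖u‖ = 1 ∧ ∀ s ∈ S, ‖π s u - u‖ < ε := by
  have hx0 : x ≠ 0 := by
    rintro rfl
    simp at hx
  have hxnorm : 0 < ‖x‖ := norm_pos_iff.mpr hx0
  refine ⟨‖x‖⁻¹ • x, norm_smul_inv_norm (𝕜 := ℝ) hx0, fun s hs => ?_⟩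
  have hsupp : s ∈ μ.support := Finsupp.mem_support_iff.mpr (hc.trans_le (hS s hs)).ne'
  have hdisp : c * ‖π s x - x‖ ^ 2 < c * (ε * ‖x‖) ^ 2 :=
    calc c * ‖π s x - x‖ ^ 2 ≤ μ s * ‖π s x - x‖ ^ 2 := by gcongr; exact hS s hs
      _ ≤ ∑ γ ∈ μ.support, μ γ * ‖π γ x - x‖ ^ 2 := Finset.single_le_sum
          (f := fun γ => μ γ * ‖π γ x - x‖ ^ 2) (fun γ _ => mul_nonneg (hμ γ) (sq_nonneg _)) hsupp
      _ < c * (ε * ‖x‖) ^ 2 := (sum_mul_norm_map_sub_sq μ x).trans_lt hx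
  have hlt : ‖π s x - x‖ < ε * ‖x‖ :=
    lt_of_pow_lt_pow_left₀ 2 (by positivity) (lt_of_mul_lt_mul_left hdisp hc.le)
  rwa [map_smul, ← smul_sub, norm_smul, norm_inv, norm_norm, inv_mul_lt_iff₀ hxnorm, mul_comm]

variable {M : InvMetric Γ} {v : H}

/-- The vectors are truncations of `∑_g w(g) π(g)v` for an almost `μ`-stationary weight `w`. -/
lemma exists_norm_pos_le_inner_opOf (hne : 0 < growthExp M)
    (hpos : ∀ g, 0 ≤ matrixCoeff π v g) (hcrit : growthExp M ≤ critExp M (matrixCoeff π v))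
    {μ : Γ →₀ ℝ} (hμ : 0 ≤ μ) (hμ1 : ∀ g, busemannSum M (growthExp M) μ g ≤ 1)
    {η : ℝ} (hη : 0 < η) (hη1 : η ≤ 1)
    (hμη : ∀ᶠ g in cofinite, 1 - η / 2 ≤ busemannSum M (growthExp M) μ g) :
    ∃ ξ : H, 0 < ‖ξ‖ ∧ (∑ γ ∈ μ.support, μ γ) * ‖ξ‖ ^ 2 - ⟪opOf π μ ξ, ξ⟫ ≤ 3 * η * ‖ξ‖ ^ 2 := by
  classical
  obtain ⟨E, hE⟩ : ∃ E : Finset Γ, ∀ g ∉ E, 1 - η / 2 ≤ busemannSum M (growthExp M) μ g :=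
    ⟨(eventually_cofinite.mp hμη).toFinset, fun g hg => by simpa using hg⟩
  obtain ⟨w, hws, hw, hw1, hwle, hwge, A, hA⟩ := exists_almost_stationary_weight hne hpos hcrit
    hμ hμ1 hη hη1 ((E.card + 2) * ‖v‖ ^ 2 / η)
  have hmass : ∑ γ ∈ μ.support, μ γ ≤ 1 + η := sum_le_of_leftConv_le hws hw hwle
  obtain ⟨F₀, hF₀⟩ := summable_iff_vanishing_norm.mp hws 1 one_pos
  set F := F₀ ∪ A
  have htail : ∀ B, Disjoint B F → ∑ g ∈ B, w g ≤ 1 := fun B hB =>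
    (le_abs_self _).trans (hF₀ B (hB.mono_right Finset.subset_union_left)).le
  set ξ := orbitSum π v F w
  have hv : 0 < ‖v‖ := by
    rw [norm_pos_iff]
    rintro rfl
    simp [matrixCoeff] at hA
  have hlarge : (E.card + 2) * ‖v‖ ^ 2 / η < ‖ξ‖ * ‖v‖ :=
    hA.trans_le (sum_mul_matrixCoeff_le_norm_orbitSum_mul hpos (fun g => (hw g).le)
      Finset.subset_union_right)
  have hξv : (E.card + 2) * ‖v‖ < η * ‖ξ‖ := by
    rw [div_lt_iff₀ hη] at hlarge
    nlinarith
  have hξ : 0 < ‖ξ‖ := pos_of_mul_pos_right ((by positivity : (0 : ℝ) < _).trans hξv) hη.le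
  have hinner := le_inner_opOf_orbitSum hpos (fun g => (hw g).le) hw1 hμ htail hη.le
    (E := E) fun g hg => hwge g (hE g hg)
  have herror : (E.card + (∑ γ ∈ μ.support, μ γ) * 1) * (‖v‖ * ‖ξ‖) ≤ η * ‖ξ‖ ^ 2 :=
    calc (E.card + (∑ γ ∈ μ.support, μ γ) * 1) * (‖v‖ * ‖ξ‖)
        ≤ (E.card + 2) * (‖v‖ * ‖ξ‖) := by gcongr; linarith
      _ = (E.card + 2) * ‖v‖ * ‖ξ‖ := by ring
      _ ≤ η * ‖ξ‖ * ‖ξ‖ := by gcongr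
      _ = η * ‖ξ‖ ^ 2 := by ring
  refine ⟨ξ, hξ, ?_⟩
  linarith [mul_le_mul_of_nonneg_right hmass (sq_nonneg ‖ξ‖)]

theorem hasAlmostInvariantVectors_of_growthExp_le_critExp (hhyp : IsStronglyHyperbolic M)
    (hrg : IsRoughlyGeodesic M) (hne : 0 < growthExp M) (hpos : ∀ g, 0 ≤ matrixCoeff π v g)
    (hcrit : growthExp M ≤ critExp M (matrixCoeff π v)) : HasAlmostInvariantVectors π := by
  intro S ε hε
  obtain ⟨c, hc, μ₀, hμ₀, hcμ₀, hμ₀le⟩ :=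
    exists_forall_mem_le_busemannSum_le_half (M := M) hne.le S
  set η := min 1 (c * ε ^ 2 / 7)
  have hη : 0 < η := by positivity
  obtain ⟨μ, hμ, hμ1, hμη⟩ := exists_eventually_one_sub_le_busemannSum hhyp hrg hne
    (summable_exp_of_growthExp_lt hne (by linarith)) hμ₀ one_half_pos
    (fun g => (hμ₀le g).trans (by norm_num)) (half_pos hη)
  have hμ0 : 0 ≤ μ := hμ₀.trans hμ
  obtain ⟨ξ, hξ, hdefect⟩ :=
    exists_norm_pos_le_inner_opOf hne hpos hcrit hμ0 hμ1 hη (min_le_left _ _) hμη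
  refine exists_norm_one_forall_norm_map_sub_lt hμ0 hc (fun s hs => (hcμ₀ s hs).trans (hμ s)) hε
    (x := ξ) ?_
  have hη7 : 7 * η ≤ c * ε ^ 2 := by linarith [min_le_right 1 (c * ε ^ 2 / 7)]
  nlinarith [mul_le_mul_of_nonneg_right hη7 (sq_nonneg ‖ξ‖), mul_pos hη (pow_pos hξ 2)]

end AlmostInvariantVectors

section SymmetricOperators

lemma pow_mul_le_pow_mul_of_sq_le_mul {a : ℕ → ℝ} (ha : ∀ n, 0 ≤ a n)
    (hconv : ∀ n, a (n + 1) ^ 2 ≤ a n * a (n + 2)) (n : ℕ) : a 1 ^ n * a 0 ≤ a 0 ^ n * a n := by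
  have hratio : ∀ n, a 1 * a n ≤ a 0 * a (n + 1) := fun n => by
    induction n with
    | zero => rw [mul_comm]
    | succ n ih =>
      obtain hzero | hpos := (ha (n + 1)).eq_or_lt
      · simpa [← hzero] using mul_nonneg (ha 0) (ha (n + 2))
      · refine le_of_mul_le_mul_right ?_ hpos
        calc a 1 * a (n + 1) * a (n + 1) = a 1 * a (n + 1) ^ 2 := by ring
          _ ≤ a 1 * (a n * a (n + 2)) := mul_le_mul_of_nonneg_left (hconv n) (ha 1)
          _ = a 1 * a n * a (n + 2) := by ring
          _ ≤ a 0 * a (n + 1) * a (n + 2) := mul_le_mul_of_nonneg_right ih (ha _)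
          _ = a 0 * a (n + 2) * a (n + 1) := by ring
  induction n with
  | zero => simp
  | succ n ih =>
    calc a 1 ^ (n + 1) * a 0 = a 1 * (a 1 ^ n * a 0) := by ring
      _ ≤ a 1 * (a 0 ^ n * a n) := mul_le_mul_of_nonneg_left ih (ha 1)
      _ = a 0 ^ n * (a 1 * a n) := by ring
      _ ≤ a 0 ^ n * (a 0 * a (n + 1)) := mul_le_mul_of_nonneg_left (hratio n) (pow_nonneg (ha 0) n)
      _ = a 0 ^ (n + 1) * a (n + 1) := by ring

lemma le_of_forall_mul_pow_le {a x y C : ℝ} (ha : 0 < a) (hy : 0 ≤ y)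
    (h : ∀ n : ℕ, a * x ^ n ≤ C * y ^ n) : x ≤ y := by
  by_contra! hyx
  have hx : 0 < x := hy.trans_lt hyx
  have hlim : Tendsto (fun n : ℕ => C * (y / x) ^ n) atTop (nhds (C * 0)) :=
    (tendsto_pow_atTop_nhds_zero_of_lt_one (by positivity) ((div_lt_one hx).mpr hyx)).const_mul C
  refine ha.not_ge ((ge_of_tendsto' hlim fun n => ?_).trans_eq (mul_zero C))
  rw [div_pow, ← mul_div_assoc, le_div_iff₀ (pow_pos hx n)]
  exact h n

lemma norm_apply_le_of_norm_inner_pow_le {𝕜 E : Type*} [RCLike 𝕜] [NormedAddCommGroup E]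
    [InnerProductSpace 𝕜 E] {T : E →ₗ[𝕜] E} (hT : T.IsSymmetric) {x : E} {C L : ℝ} (hL : 0 ≤ L)
    (h : ∀ n : ℕ, ‖inner 𝕜 ((T ^ n) x) x‖ ≤ C * L ^ n) : ‖T x‖ ≤ L * ‖x‖ := by
  obtain rfl | hx := eq_or_ne x 0
  · simp
  have hnormsq : ∀ y : E, ‖inner 𝕜 y y‖ = ‖y‖ ^ 2 := fun y => by
    simp [inner_self_eq_norm_sq_to_K]
  have hinner : ∀ m n, inner 𝕜 ((T ^ (m + n)) x) x = inner 𝕜 ((T ^ m) x) ((T ^ n) x) :=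
    fun m n => by rw [add_comm, pow_add, Module.End.mul_apply, hT.pow n]
  have hlogconvex : ∀ n, ‖(T ^ (n + 1)) x‖ ^ 2 ≤ ‖(T ^ n) x‖ * ‖(T ^ (n + 2)) x‖ := fun n => by
    rw [← hnormsq, ← hinner,
      show n + 1 + (n + 1) = n + (n + 2) by ring, hinner]
    exact norm_inner_le_norm _ _
  have hgrowth : ∀ n, ‖T x‖ ^ n * ‖x‖ ≤ ‖x‖ ^ n * ‖(T ^ n) x‖ := by
    simpa using pow_mul_le_pow_mul_of_sq_le_mul (fun n => norm_nonneg ((T ^ n) x)) hlogconvex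
  have hsq : ‖T x‖ ^ 2 ≤ (L * ‖x‖) ^ 2 := by
    refine le_of_forall_mul_pow_le (a := ‖x‖ ^ 2) (C := C) (by positivity) (by positivity)
      fun n => ?_
    calc ‖x‖ ^ 2 * (‖T x‖ ^ 2) ^ n = (‖T x‖ ^ n * ‖x‖) ^ 2 := by ring
      _ ≤ (‖x‖ ^ n * ‖(T ^ n) x‖) ^ 2 := pow_le_pow_left₀ (by positivity) (hgrowth n) 2
      _ = (‖x‖ ^ n) ^ 2 * ‖inner 𝕜 ((T ^ (n + n)) x) x‖ := by
        rw [hinner, hnormsq, mul_pow]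
      _ ≤ (‖x‖ ^ n) ^ 2 * (C * L ^ (n + n)) := by gcongr; exact h _
      _ = C * ((L * ‖x‖) ^ 2) ^ n := by ring
  exact le_of_sq_le_sq hsq (by positivity)

end SymmetricOperators

section SchurTest

variable {μ : Γ →₀ ℝ} {L : ℝ}

lemma abs_leftConv_le (hμ : 0 ≤ μ) (u : Γ → ℝ) (g : Γ) :
    |leftConv μ u g| ≤ leftConv μ (fun h => |u h|) g :=
  (Finset.abs_sum_le_sum_abs _ _).trans_eq
    (Finset.sum_congr rfl fun γ _ => by rw [abs_mul, abs_of_nonneg (hμ γ)])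

/-- The Poincaré series `∑_g w(g) f(k⁻¹g)` with weight `w`, as a function of the base point `k`. -/
noncomputable def poincareSeries (w f : Γ → ℝ) (k : Γ) : ℝ := ∑' g, w g * f (k⁻¹ * g)

lemma leftConv_poincareSeries_le {w f : Γ → ℝ} (hf : ∀ g, 0 ≤ f g)
    (hs : ∀ k, Summable fun g => w g * f (k⁻¹ * g)) (hw : ∀ g, leftConv μ w g ≤ L * w g) (k : Γ) :
    leftConv μ (poincareSeries w f) k ≤ L * poincareSeries w f k := by
  have htranslate : ∀ γ : Γ, HasSum (fun g => w (γ⁻¹ * g) * f (k⁻¹ * g))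
      (poincareSeries w f (γ⁻¹ * k)) := fun γ => by
    have hsum := (Equiv.mulLeft γ⁻¹).hasSum_iff.mpr (hs (γ⁻¹ * k)).hasSum
    simpa [poincareSeries, Function.comp_def, mul_assoc] using hsum
  have hconv : HasSum (fun g => leftConv μ w g * f (k⁻¹ * g))
      (leftConv μ (poincareSeries w f) k) := by
    simp only [leftConv, Finset.sum_mul, mul_assoc]
    exact hasSum_sum fun γ _ => (htranslate γ).mul_left _
  refine hasSum_le (fun g => ?_) hconv ((hs k).hasSum.mul_left L)
  rw [← mul_assoc]
  exact mul_le_mul_of_nonneg_right (hw g) (hf _)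

variable {H : Type*} [NormedAddCommGroup H] [InnerProductSpace ℝ H] {π : Γ →* (H ≃ₗᵢ[ℝ] H)} {v : H}

lemma inner_map_left (γ : Γ) (x y : H) : ⟪π γ x, y⟫ = ⟪x, π γ⁻¹ y⟫ := by
  rw [← (π γ⁻¹).inner_map_map, ← rep_mul_apply, inv_mul_cancel, map_one]
  rfl

lemma isSymmetric_opOf (hμ : ∀ g, μ g⁻¹ = μ g) : (opOf π μ : H →ₗ[ℝ] H).IsSymmetric := by
  intro x y
  simp only [ContinuousLinearMap.coe_coe, opOf_apply, sum_inner, inner_sum, real_inner_smul_left,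
    real_inner_smul_right]
  refine Finset.sum_equiv (Equiv.inv Γ) (fun γ => by simp [hμ]) fun γ _ => ?_
  rw [Equiv.inv_apply, hμ, inner_map_left]

lemma inner_opOf_orbit (x : H) (k : Γ) :
    ⟪opOf π μ x, π k v⟫ = leftConv μ (fun h => ⟪x, π h v⟫) k := by
  simp only [opOf_apply, sum_inner, real_inner_smul_left, leftConv, inner_map_left, rep_mul_apply]

lemma abs_inner_opOf_pow_orbit_le (hμ : 0 ≤ μ) {P : Γ → ℝ} (hP : ∀ g, leftConv μ P g ≤ L * P g)
    {x : H} {D : ℝ} (hD : 0 ≤ D) (hL : 0 ≤ L) (hx : ∀ k, |⟪x, π k v⟫| ≤ D * P k) (n : ℕ) (k : Γ) :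
    |⟪((opOf π μ : H →ₗ[ℝ] H) ^ n) x, π k v⟫| ≤ D * L ^ n * P k := by
  induction n generalizing k with
  | zero => simpa using hx k
  | succ n ih =>
    rw [pow_succ', Module.End.mul_apply, ContinuousLinearMap.coe_coe, inner_opOf_orbit]
    calc _ ≤ leftConv μ (fun h => D * L ^ n * P h) k :=
          (abs_leftConv_le hμ _ k).trans (leftConv_mono hμ ih k)
      _ = D * L ^ n * leftConv μ P k := leftConv_const_mul _ k
      _ ≤ D * L ^ n * (L * P k) := mul_le_mul_of_nonneg_left (hP k) (by positivity)
      _ = D * L ^ (n + 1) * P k := by ring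

lemma exists_abs_inner_orbit_le_of_mem_span {P : Γ → ℝ}
    (hv : ∀ h, ∃ D, 0 ≤ D ∧ ∀ k, |matrixCoeff π v (k⁻¹ * h)| ≤ D * P k) {x : H}
    (hx : x ∈ Submodule.span ℝ (Set.range fun g => π g v)) :
    ∃ D, 0 ≤ D ∧ ∀ k, |⟪x, π k v⟫| ≤ D * P k := by
  induction hx using Submodule.span_induction with
  | mem x hx =>
    obtain ⟨h, rfl⟩ := hx
    simpa only [inner_orbit] using hv h
  | zero => exact ⟨0, le_rfl, by simp⟩
  | add x y _ _ hx hy =>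
    obtain ⟨D, hD, hx⟩ := hx
    obtain ⟨D', hD', hy⟩ := hy
    refine ⟨D + D', add_nonneg hD hD', fun k => ?_⟩
    rw [inner_add_left, add_mul]
    exact (abs_add_le _ _).trans (add_le_add (hx k) (hy k))
  | smul a x _ hx =>
    obtain ⟨D, hD, hx⟩ := hx
    refine ⟨|a| * D, by positivity, fun k => ?_⟩
    rw [real_inner_smul_left, abs_mul, mul_assoc]
    exact mul_le_mul_of_nonneg_left (hx k) (abs_nonneg a)

lemma exists_abs_inner_opOf_pow_le (hμ : 0 ≤ μ) (hL : 0 ≤ L) {P : Γ → ℝ}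
    (hP : ∀ g, leftConv μ P g ≤ L * P g) {x : H} {D : ℝ} (hD : 0 ≤ D)
    (hx : ∀ k, |⟪x, π k v⟫| ≤ D * P k) {y : H}
    (hy : y ∈ Submodule.span ℝ (Set.range fun g => π g v)) :
    ∃ C, ∀ n : ℕ, |⟪((opOf π μ : H →ₗ[ℝ] H) ^ n) x, y⟫| ≤ C * L ^ n := by
  induction hy using Submodule.span_induction with
  | mem y hy =>
    obtain ⟨k, rfl⟩ := hy
    refine ⟨D * P k, fun n => ?_⟩
    linarith [abs_inner_opOf_pow_orbit_le hμ hP hD hL hx n k]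
  | zero => exact ⟨0, by simp⟩
  | add y z _ _ hy hz =>
    obtain ⟨C, hy⟩ := hy
    obtain ⟨C', hz⟩ := hz
    refine ⟨C + C', fun n => ?_⟩
    rw [inner_add_right, add_mul]
    exact (abs_add_le _ _).trans (add_le_add (hy n) (hz n))
  | smul a y _ hy =>
    obtain ⟨C, hy⟩ := hy
    refine ⟨|a| * C, fun n => ?_⟩
    rw [real_inner_smul_right, abs_mul, mul_assoc]
    exact mul_le_mul_of_nonneg_left (hy n) (abs_nonneg a)

/-- A Schur test with test function `P`. -/
lemma norm_opOf_le_of_leftConv_le (hμ : 0 ≤ μ) (hμinv : ∀ g, μ g⁻¹ = μ g) (hL : 0 ≤ L)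
    (hcyc : Dense ((Submodule.span ℝ (Set.range fun g : Γ => π g v) : Submodule ℝ H) : Set H))
    {P : Γ → ℝ} (hP : ∀ g, leftConv μ P g ≤ L * P g)
    (hv : ∀ h, ∃ D, 0 ≤ D ∧ ∀ k, |matrixCoeff π v (k⁻¹ * h)| ≤ D * P k) :
    ‖opOf π μ‖ ≤ L := by
  refine ContinuousLinearMap.opNorm_le_bound _ hL fun x => ?_
  refine hcyc.induction (fun x hx => ?_) (isClosed_le (by fun_prop) (by fun_prop)) x
  obtain ⟨D, hD, hxD⟩ := exists_abs_inner_orbit_le_of_mem_span hv hx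
  obtain ⟨C, hC⟩ := exists_abs_inner_opOf_pow_le hμ hL hP hD hxD hx
  exact norm_apply_le_of_norm_inner_pow_le (isSymmetric_opOf hμinv) hL hC

end SchurTest

section SpectralGap

variable {H : Type*} [NormedAddCommGroup H] [InnerProductSpace ℝ H] {π : Γ →* (H ≃ₗᵢ[ℝ] H)} {v : H}
  {M : InvMetric Γ}

lemma abs_matrixCoeff_le_poincareSeries {w : Γ → ℝ} (hw : ∀ g, 0 < w g)
    (hpos : ∀ g, 0 ≤ matrixCoeff π v g)
    (hs : ∀ k, Summable fun g => w g * matrixCoeff π v (k⁻¹ * g)) (h k : Γ) :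
    |matrixCoeff π v (k⁻¹ * h)| ≤ (w h)⁻¹ * poincareSeries w (matrixCoeff π v) k := by
  rw [abs_of_nonneg (hpos _), le_inv_mul_iff₀ (hw h)]
  exact (hs k).le_tsum h fun g _ => mul_nonneg (hw g).le (hpos _)

lemma sum_le_norm_opOf_of_hasAlmostInvariantVectors (hπ : HasAlmostInvariantVectors π)
    {μ : Γ →₀ ℝ} (hμ : 0 ≤ μ) : ∑ γ ∈ μ.support, μ γ ≤ ‖opOf π μ‖ := by
  set m := ∑ γ ∈ μ.support, μ γ with hm
  have hm0 : 0 ≤ m := Finset.sum_nonneg fun γ _ => hμ γ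
  refine le_of_forall_pos_le_add fun ε hε => ?_
  obtain ⟨u, hu, hinv⟩ := hπ μ.support (ε / (m + 1)) (by positivity)
  have hdisp : ‖m • u - opOf π μ u‖ ≤ ε :=
    calc ‖m • u - opOf π μ u‖ = ‖∑ γ ∈ μ.support, μ γ • (u - π γ u)‖ := by
          simp only [hm, Finset.sum_smul, opOf_apply, smul_sub, Finset.sum_sub_distrib]
      _ ≤ ∑ γ ∈ μ.support, μ γ * (ε / (m + 1)) := norm_sum_le_of_le _ fun γ hγ => by
          rw [norm_smul, Real.norm_of_nonneg (hμ γ), norm_sub_rev]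
          exact mul_le_mul_of_nonneg_left (hinv γ hγ).le (hμ γ)
      _ = ε * (m / (m + 1)) := by rw [← Finset.sum_mul, ← hm]; ring
      _ ≤ ε := mul_le_of_le_one_right hε.le (div_le_one_of_le₀ (by linarith) (by linarith))
  calc m = ‖m • u‖ := by rw [norm_smul, hu, mul_one, Real.norm_of_nonneg hm0]
    _ ≤ ‖opOf π μ u‖ + ‖m • u - opOf π μ u‖ := norm_le_norm_add_norm_sub' _ _
    _ ≤ ‖opOf π μ‖ + ε := add_le_add (by simpa [hu] using (opOf π μ).le_opNorm u) hdisp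

lemma sum_ballRestrict_one (M : InvMetric Γ) (r : ℝ) :
    ∑ γ ∈ (ballRestrict M 1 r).support, ballRestrict M 1 r γ = (M.ball r).card := by
  classical
  rw [ballRestrict, Finset.sum_subset (Finsupp.support_indicator_subset _ _)
    fun γ _ hγ => Finsupp.notMem_support_iff.mp hγ]
  simp [Finsupp.indicator_apply, -InvMetric.mem_ball]

lemma ballRestrict_one_inv (r : ℝ) (g : Γ) :
    ballRestrict M 1 r g⁻¹ = ballRestrict M 1 r g := by
  classical
  simp [ballRestrict, Finsupp.indicator_apply, M.d_inv_one]

lemma exists_norm_opOf_ballRestrict_one_le (hhyp : IsHyperbolic M) (hrg : IsRoughlyGeodesic M)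
    {s t : ℝ} (hts : t ≤ s) (hst : s < 2 * t) (hs : Summable fun g => Real.exp (-s * M.d g 1))
    (hcyc : Dense ((Submodule.span ℝ (Set.range fun g : Γ => π g v) : Submodule ℝ H) : Set H))
    (hpos : ∀ g, 0 ≤ matrixCoeff π v g)
    (ht : Summable fun g => Real.exp (-t * M.d g 1) * matrixCoeff π v g) :
    ∃ K, ∀ r, 0 ≤ r → ‖opOf π (ballRestrict M 1 r)‖ ≤ K * Real.exp (t * r) := by
  obtain ⟨K, hK, hsum⟩ := exists_sum_busemannKernel_le hhyp hrg hts hst hs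
  refine ⟨K, fun r hr => ?_⟩
  set w := fun g => Real.exp (-t * M.d g 1)
  have hw : ∀ g, 0 < w g := fun g => Real.exp_pos _
  have hconv : ∀ g, leftConv (ballRestrict M 1 r) w g ≤ K * Real.exp (t * r) * w g := fun g => by
    rw [leftConv_exp, ballRestrict, busemannSum_indicator]
    refine mul_le_mul_of_nonneg_right ?_ (hw g).le
    have h := hsum r r g (M.ball r) hr (fun γ hγ => M.mem_ball.mp hγ)
      fun γ hγ => (gromov_le_left γ g 1).trans (M.mem_ball.mp hγ)
    rw [show (s - t) * r + (2 * t - s) * r = t * r by ring] at h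
    simpa using h
  have hws := summable_exp_mul_translate (by linarith) hpos ht
  exact norm_opOf_le_of_leftConv_le (ballRestrict_nonneg (fun _ => zero_le_one) r)
    (ballRestrict_one_inv r) (by positivity) hcyc (leftConv_poincareSeries_le hpos hws hconv)
    fun h => ⟨(w h)⁻¹, (inv_pos.mpr (hw h)).le, abs_matrixCoeff_le_poincareSeries hw hpos hws h⟩

theorem not_hasAlmostInvariantVectors_of_critExp_lt_growthExp (hhyp : IsHyperbolic M)
    (hrg : IsRoughlyGeodesic M) (hne : 0 < growthExp M)
    (hcyc : Dense ((Submodule.span ℝ (Set.range fun g : Γ => π g v) : Submodule ℝ H) : Set H))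
    (hpos : ∀ g, 0 ≤ matrixCoeff π v g) (hcrit : critExp M (matrixCoeff π v) < growthExp M) :
    ¬ HasAlmostInvariantVectors π := by
  intro hπ
  obtain ⟨t, hcrit_t, ht⟩ := exists_between (max_lt hcrit (half_lt_self hne))
  obtain ⟨hcrit_t, hhalf⟩ := max_lt_iff.mp hcrit_t
  obtain ⟨s, hs, hst⟩ := exists_between (show growthExp M < 2 * t by linarith)
  obtain ⟨K, hK⟩ := exists_norm_opOf_ballRestrict_one_le hhyp hrg (ht.trans hs).le hst
    (summable_exp_of_growthExp_lt hne hs) hcyc hpos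
    (summable_exp_mul_of_critExp_lt hne hpos abs_matrixCoeff_le hcrit_t)
  obtain ⟨r, hr, hcard⟩ := exists_mul_exp_lt_card_ball ht K
  have hmass := sum_le_norm_opOf_of_hasAlmostInvariantVectors hπ
    (ballRestrict_nonneg (M := M) (f := 1) (fun _ => zero_le_one) r)
  rw [sum_ballRestrict_one] at hmass
  exact (hmass.trans (hK r hr)).not_gt hcard

end SpectralGap

theorem critical_gap_iff_almost_invariant_general (M : InvMetric Γ)
    (hhyp : IsStronglyHyperbolic M) (hrg : IsRoughlyGeodesic M) (hne : 0 < growthExp M)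
    {H : Type*} [NormedAddCommGroup H] [InnerProductSpace ℝ H]
    (π : Γ →* (H ≃ₗᵢ[ℝ] H)) (v : H)
    (hcyc : Dense ((Submodule.span ℝ (Set.range fun g : Γ => π g v) : Submodule ℝ H) : Set H))
    (φ : Γ → ℝ) (hφ : ∀ g, φ g = ⟪π g v, v⟫) (hpos : ∀ g, 0 ≤ φ g) :
    (critExp M φ = growthExp M ↔ HasAlmostInvariantVectors π) ∧
    (critExp M φ < growthExp M ↔ ¬ HasAlmostInvariantVectors π) := by
  obtain rfl : φ = matrixCoeff π v := funext hφ
  have hle : critExp M (matrixCoeff π v) ≤ growthExp M :=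
    critExp_le_growthExp hne abs_matrixCoeff_le
  have hgap : critExp M (matrixCoeff π v) < growthExp M ↔ ¬ HasAlmostInvariantVectors π :=
    ⟨not_hasAlmostInvariantVectors_of_critExp_lt_growthExp hhyp.isHyperbolic hrg hne hcyc hpos,
      fun h => lt_of_not_ge fun hge =>
        h (hasAlmostInvariantVectors_of_growthExp_le_critExp hhyp hrg hne hpos hge)⟩
  exact ⟨by rw [← not_iff_not, ← hgap, hle.lt_iff_ne], hgap⟩

/-- On a non-elementary hyperbolic group with a strongly hyperbolic
invariant metric, a pointwise nonnegative positive definite function `φ` satisfies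
`δ(φ) = δ` iff its GNS representation has almost invariant vectors (`1 ≺ π_φ`);
equivalently `δ(φ) < δ` iff `π_φ` has a spectral gap (no almost invariant vectors). -/
theorem critical_gap_iff_almost_invariant [Group.FG Γ] (M : InvMetric Γ)
    (hhyp : IsStronglyHyperbolic M) (hrg : IsRoughlyGeodesic M)
    (hne : 0 < growthExp M)
    {H : Type*} [NormedAddCommGroup H] [InnerProductSpace ℝ H] [CompleteSpace H]
    (π : Γ →* (H ≃ₗᵢ[ℝ] H)) (v : H) (hv : ‖v‖ = 1)
    (hcyc : Dense ((Submodule.span ℝ (Set.range fun g : Γ => π g v) : Submodule ℝ H) : Set H))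
    (φ : Γ → ℝ) (hφ : ∀ g, φ g = ⟪π g v, v⟫) (hpos : ∀ g, 0 ≤ φ g) :
    (critExp M φ = growthExp M ↔ HasAlmostInvariantVectors π) ∧
    (critExp M φ < growthExp M ↔ ¬ HasAlmostInvariantVectors π) :=
  critical_gap_iff_almost_invariant_general M hhyp hrg hne π v hcyc φ hφ hpos
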